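/- arXiv:math/0508421 — 4 statements merged into one kernel-verified Lean document; each statement's English description precedes it below -/
import Mathlib

section
/- For the binary quintic in Sylvester canonical form F(x₁,x₂) = u·x₁⁵ + v·x₂⁵ − w·(x₁+x₂)⁵ with u, v, w ∈ ℂ, one has L(F) = u⁴v⁴w⁴. -/
/-!
For linear forms `ℓ`, `m` with bracket `[ℓm]` one has `(ℓ^p, m^q)_k = [ℓm]^k ℓ^(p-k) m^(q-k)`. The
Sylvester form is a combination of fifth powers of `x₁`, `x₂` and `z = x₁ + x₂`, whose pairwise
brackets are `±1`, so its covariants are short: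

* `C₁ = 2 (uv x₁x₂ - uw x₁z - vw x₂z)` (`cov1_sylvester`),
* `C₂ = -2uvw (x₁³ + x₂³ - z³) = 6uvw x₁x₂z` (`cov2_sylvester`),
* `C₃ = -8 (uvw)² (x₁² + x₁x₂ + x₂²)` (`cov3_sylvester`).

Finally `(C₃,C₃)₂ = 64 (uvw)⁴ · 2 (1 - 1/4) = 96 (uvw)⁴`. Each identity is verified by computing the
derivatives in the definition of the transvectant and comparing polynomials.
-/

noncomputable section

open MvPolynomial

abbrev P2 := MvPolynomial (Fin 2) ℂ

/-- The bracket `(bc) = b₁c₂ − b₂c₁` of two points of `ℂ²`. -/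
def br (b c : Fin 2 → ℂ) : ℂ := b 0 * c 1 - b 1 * c 0

/-- The linear binary form `(xλ) = x₁λ₂ − x₂λ₁` with homogeneous root `λ`. -/
def lin (l : Fin 2 → ℂ) : P2 := C (l 1) * X 0 - C (l 0) * X 1

/-- The binary quintic with homogeneous roots `λ₁,…,λ₅`. -/
def quinticOf (l : Fin 5 → Fin 2 → ℂ) : P2 := ∏ i, lin (l i)

/-- The binary quartic obtained from the quintic with roots `λ₁,…,λ₅` by
omitting the `i`-th factor. -/
def quarticOmit (l : Fin 5 → Fin 2 → ℂ) (i : Fin 5) : P2 :=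
  ∏ j ∈ Finset.univ.erase i, lin (l j)

/-- The binary quartic with homogeneous roots `ξ₁,…,ξ₄`. -/
def quarticOf (l : Fin 4 → Fin 2 → ℂ) : P2 := ∏ i, lin (l i)

/-- The coefficient of `x₁^i x₂^j` in a binary form. -/
def mcoeff (i j : ℕ) (F : P2) : ℂ :=
  MvPolynomial.coeff (Finsupp.single 0 i + Finsupp.single 1 j) F

/-- The invariant `S = q₀q₄ − 4q₁q₃ + 3q₂²` of a binary quartic
`Q = q₀x₁⁴ + 4q₁x₁³x₂ + 6q₂x₁²x₂² + 4q₃x₁x₂³ + q₄x₂⁴`. -/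
def Sq (Q : P2) : ℂ :=
  mcoeff 4 0 Q * mcoeff 0 4 Q - 4 * (mcoeff 3 1 Q / 4) * (mcoeff 1 3 Q / 4)
    + 3 * (mcoeff 2 2 Q / 6) ^ 2

/-- The invariant `T = q₀q₂q₄ + 2q₁q₂q₃ − q₂³ − q₀q₃² − q₁²q₄` of a binary quartic. -/
def Tq (Q : P2) : ℂ :=
  mcoeff 4 0 Q * (mcoeff 2 2 Q / 6) * mcoeff 0 4 Q
    + 2 * (mcoeff 3 1 Q / 4) * (mcoeff 2 2 Q / 6) * (mcoeff 1 3 Q / 4)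
    - (mcoeff 2 2 Q / 6) ^ 3 - mcoeff 4 0 Q * (mcoeff 1 3 Q / 4) ^ 2
    - (mcoeff 3 1 Q / 4) ^ 2 * mcoeff 0 4 Q

/-- The quintic `R̄ = ∏ᵢ ((S(Qᵢ)³ − 27T(Qᵢ)²)z − S(Qᵢ)³)` in the variable `z`. -/
def Rbar (l : Fin 5 → Fin 2 → ℂ) : Polynomial ℂ :=
  ∏ i : Fin 5,
    (Polynomial.C (Sq (quarticOmit l i) ^ 3 - 27 * Tq (quarticOmit l i) ^ 2) * Polynomial.X
      - Polynomial.C (Sq (quarticOmit l i) ^ 3))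

/-- The invariant `Bᵢ`, defined by `R̄ = Σᵢ Bᵢ z^(5−i)`. -/
def Binv (l : Fin 5 → Fin 2 → ℂ) (i : ℕ) : ℂ := (Rbar l).coeff (5 - i)

/-- Partial derivative of a binary form. -/
def pd (i : Fin 2) (F : P2) : P2 := MvPolynomial.pderiv i F

/-- The `k`-th transvectant of binary forms `F`, `G` of orders `p`, `q`. -/
def transv (p q k : ℕ) (F G : P2) : P2 :=
  C ((Nat.factorial (p - k) * Nat.factorial (q - k) : ℂ)
      / (Nat.factorial p * Nat.factorial q)) *
  ∑ i ∈ Finset.range (k + 1),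
    C ((-1 : ℂ) ^ i * (Nat.choose k i : ℂ)) *
      ((pd 1)^[i] ((pd 0)^[k - i] F)) * ((pd 0)^[i] ((pd 1)^[k - i] G))

/-- The covariant `C₁ = (F,F)₄` of a binary quintic. -/
def cov1 (F : P2) : P2 := transv 5 5 4 F F
/-- The covariant `C₂ = (F,C₁)₂` of a binary quintic. -/
def cov2 (F : P2) : P2 := transv 5 2 2 F (cov1 F)
/-- The covariant `C₃ = (C₂,C₂)₂` of a binary quintic. -/
def cov3 (F : P2) : P2 := transv 3 3 2 (cov2 F) (cov2 F)
/-- The covariant `C₄ = (C₂,C₁)₂` of a binary quintic. -/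
def cov4 (F : P2) : P2 := transv 3 2 2 (cov2 F) (cov1 F)

/-- The degree `4` invariant `J = −½(C₁,C₁)₂` of a binary quintic. -/
def Jinv (F : P2) : ℂ := -(1/2) * constantCoeff (transv 2 2 2 (cov1 F) (cov1 F))
/-- The degree `8` invariant `K = ⅛(C₁,C₃)₂` of a binary quintic. -/
def Kinv (F : P2) : ℂ := (1/8) * constantCoeff (transv 2 2 2 (cov1 F) (cov3 F))
/-- The degree `12` invariant `L = (1/96)(C₃,C₃)₂` of a binary quintic. -/
def Linv (F : P2) : ℂ := (1/96) * constantCoeff (transv 2 2 2 (cov3 F) (cov3 F))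
/-- The degree `18` invariant `H = −(1/384)((C₄,C₃)₁,(C₁,C₄)₁)₁` of a binary quintic. -/
def Hinv (F : P2) : ℂ :=
  -(1/384) *
    constantCoeff (transv 1 1 1 (transv 1 2 1 (cov4 F) (cov3 F)) (transv 2 1 1 (cov1 F) (cov4 F)))

/-- The coefficients `a₀,…,a₅` of a binary quintic `F = Σ aᵢ x₁^(5−i) x₂^i`. -/
def qcoeffs (F : P2) : Fin 6 → ℂ := fun i => mcoeff (5 - (i : ℕ)) (i : ℕ) F

/-- The binary quintic with coefficients `a₀,…,a₅`. -/
def formOf (a : Fin 6 → ℂ) : P2 := ∑ i : Fin 6, C (a i) * X 0 ^ (5 - (i : ℕ)) * X 1 ^ (i : ℕ)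

/-- The `GL₂(ℂ)` action on binary forms, `(gF)(x) = F(g⁻¹x)`. -/
def act (g : Matrix.GeneralLinearGroup (Fin 2) ℂ) (F : P2) : P2 :=
  aeval (fun i => ∑ j,
    C (((g⁻¹ : Matrix.GeneralLinearGroup (Fin 2) ℂ) : Matrix (Fin 2) (Fin 2) ℂ) i j) * X j) F

/-- The `SL₂(ℂ)` action on binary forms, `(gF)(x) = F(g⁻¹x)`. -/
def actSL (g : Matrix.SpecialLinearGroup (Fin 2) ℂ) (F : P2) : P2 :=
  aeval (fun i => ∑ j,
    C (((g⁻¹ : Matrix.SpecialLinearGroup (Fin 2) ℂ) : Matrix (Fin 2) (Fin 2) ℂ) i j) * X j) F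

/-- `P` (a polynomial in the coefficients `a₀,…,a₅` of a binary quintic) is an
`SL₂(ℂ)`-invariant: `P(gF) = P(F)` for all `g ∈ SL₂(ℂ)`. -/
def IsInvariantPoly (P : MvPolynomial (Fin 6) ℂ) : Prop :=
  ∀ (g : Matrix.SpecialLinearGroup (Fin 2) ℂ) (a : Fin 6 → ℂ),
    MvPolynomial.eval (qcoeffs (actSL g (formOf a))) P = MvPolynomial.eval a P

/-- The discriminant `∏_{i<j} (λᵢλⱼ)²` of a binary quintic with roots `λ₁,…,λ₅`. -/
def disc5 (l : Fin 5 → Fin 2 → ℂ) : ℂ := ∏ i, ∏ j ∈ Finset.Ioi i, br (l i) (l j) ^ 2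

/-- The discriminant `∏_{i<j} (ξᵢξⱼ)²` of a binary quartic with roots `ξ₁,…,ξ₄`. -/
def disc4 (l : Fin 4 → Fin 2 → ℂ) : ℂ := ∏ i, ∏ j ∈ Finset.Ioi i, br (l i) (l j) ^ 2

/-- The Sylvester canonical form `u x₁⁵ + v x₂⁵ − w (x₁+x₂)⁵`. -/
def sylvester (u v w : ℂ) : P2 := C u * X 0 ^ 5 + C v * X 1 ^ 5 - C w * (X 0 + X 1) ^ 5

/-- The submodule of `SL₂(ℂ)`-invariant polynomials in the coefficients of the
binary quintic. -/
def invariantSubmodule : Submodule ℂ (MvPolynomial (Fin 6) ℂ) :=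
  ⨅ (g : Matrix.SpecialLinearGroup (Fin 2) ℂ), ⨅ (a : Fin 6 → ℂ),
    LinearMap.ker
      ((aeval (R := ℂ) (qcoeffs (actSL g (formOf a)))).toLinearMap
        - (aeval (R := ℂ) a).toLinearMap)


/-- The factorial prefactors of the transvectants are cleared in `P2` through this relation. -/
theorem C_natCast_inv_mul (n : ℕ) (hn : (n : ℂ) ≠ 0) : (C ((n : ℂ)⁻¹) : P2) * (n : P2) = 1 := by
  rw [← map_natCast (C : ℂ →+* P2) n, ← C_mul, inv_mul_cancel₀ hn, C_1]

theorem pderiv_ofNat (i : Fin 2) (n : ℕ) [n.AtLeastTwo] :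
    pderiv i (ofNat(n) : P2) = 0 :=
  Derivation.map_natCast _ n

theorem C_ofNat (n : ℕ) [n.AtLeastTwo] :
    (C (ofNat(n) : ℂ) : P2) = ofNat(n) :=
  map_ofNat C n

/-- Each term is the transvectant of two of the fifth powers, all brackets having fourth power `1`;
the self-pairings vanish. The prefactor of `(F,F)₄` is `1/14400`. -/
theorem cov1_sylvester (u v w : ℂ) :
    cov1 (sylvester u v w) =
      2 * (C u * C v * (X 0 * X 1) - C u * C w * (X 0 * (X 0 + X 1))
        - C v * C w * (X 1 * (X 0 + X 1))) := by
  have h := C_natCast_inv_mul 14400 (by norm_num)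
  simp only [cov1, transv, sylvester, Finset.sum_range_succ, Finset.sum_range_zero]
  norm_num [pd, Pi.single_apply, Nat.factorial, Nat.choose, pderiv_ofNat, C_ofNat] at h ⊢
  linear_combination (2 * (C u * C v * (X 0 * X 1) - C u * C w * (X 0 * (X 0 + X 1))
        - C v * C w * (X 1 * (X 0 + X 1)))) * h

/-- This is `-2uvw (x₁³ + x₂³ - (x₁+x₂)³)`, written in factored form. -/
theorem cov2_sylvester (u v w : ℂ) :
    cov2 (sylvester u v w) = 6 * (C u * C v * C w) * (X 0 * X 1 * (X 0 + X 1)) := by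
  have h := C_natCast_inv_mul 40 (by norm_num)
  rw [cov2, cov1_sylvester]
  simp only [transv, sylvester, Finset.sum_range_succ, Finset.sum_range_zero]
  norm_num [pd, Pi.single_apply, Nat.factorial, Nat.choose, pderiv_ofNat, C_ofNat] at h ⊢
  linear_combination (6 * (C u * C v * C w) * (X 0 * X 1 * (X 0 + X 1))) * h

/-- The Hessian of a cubic with roots `0, -1, ∞` is a multiple of `x₁² + x₁x₂ + x₂²`. -/
theorem cov3_sylvester (u v w : ℂ) :
    cov3 (sylvester u v w) =
      -8 * (C u * C v * C w) ^ 2 * (X 0 ^ 2 + X 0 * X 1 + X 1 ^ 2) := by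
  have h := C_natCast_inv_mul 36 (by norm_num)
  rw [cov3, cov2_sylvester]
  simp only [transv, Finset.sum_range_succ, Finset.sum_range_zero]
  norm_num [pd, Pi.single_apply, Nat.factorial, Nat.choose, pderiv_ofNat, C_ofNat] at h ⊢
  linear_combination (-8 * (C u * C v * C w) ^ 2 * (X 0 ^ 2 + X 0 * X 1 + X 1 ^ 2)) * h

/-- `L = u⁴v⁴w⁴` on the Sylvester canonical form. -/
theorem linv_sylvester (u v w : ℂ) :
    Linv (sylvester u v w) = u ^ 4 * v ^ 4 * w ^ 4 := by
  rw [Linv, cov3_sylvester]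
  simp only [transv, Finset.sum_range_succ, Finset.sum_range_zero]
  norm_num [pd, Pi.single_apply, Nat.factorial, Nat.choose, pderiv_ofNat, C_ofNat, map_ofNat constantCoeff]
  ring

end
end

section
/- For every integer l ≥ 1, the complex vector space of SL₂(ℂ)-invariant homogeneous polynomials of degree 24l in the coefficients a₀,…,a₅ of the binary quintic has dimension 3l² + 3l + 1. -/
/-!
In degrees divisible by `4` the invariants of the binary quintic are exactly the polynomials in
three algebraically independent invariants `J, K, L` of degrees `4, 8, 12`. The dimension in
degree `24l` is then the number of solutions of `4i + 8j + 12k = 24l`, which is `3l² + 3l + 1`.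

* A quintic with `L ≠ 0` is `SL₂`-equivalent to a Sylvester form `u x₁⁵ + v x₂⁵ - w (x₁ + x₂)⁵`:
  its cubic covariant has distinct roots, can be moved to a multiple of `x₁ x₂ (x₁ + x₂)`, and
  is apolar to the quintic. Hence an invariant is determined by its restriction to
  Sylvester forms (`eq_zero_of_sylv`).
* With `e₁, e₂, e₃` the elementary symmetric polynomials in `u, v, w`, the restrictions of
  `J, K, L` are, up to constants, `e₂² - 4 e₁ e₃`, `e₃² e₂` and `e₃⁴`. The restriction of an
  invariant of degree divisible by `4` is symmetric in `u, v, w` (`res_isSymmetric`), hence a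
  polynomial in the `eᵢ`. After multiplication by a power of `e₃⁴` it becomes a polynomial in
  the restrictions of `J` and `K` and in `e₃`, and degrees modulo `4` show that only powers of
  `e₃⁴` occur. So `L^m P` is a polynomial in `J, K, L` for every such invariant `P`.
* On the quintics `x₁⁵ + b x₁ x₂⁴ + c x₂⁵` the invariant `L` vanishes while `(J, K)` takes every
  value, so a polynomial in `J, K, L` divisible by `L` is `L` times another such polynomial
  (`X_two_dvd_of_lInv_dvd`). This gives both the algebraic independence of `J, K, L` and the
  removal of the factor `L^m` (`exists_aeval_jkl`).
-/

noncomputable section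

open MvPolynomial

/-! ### Covariants of the quintic and the invariants of degrees 4, 8, 12 -/

section Covariants

variable {R : Type*} [CommRing R]

/-- The coefficients of `F(p x₁ + q x₂, r x₁ + s x₂)`, where `F = Σ aᵢ x₁^(5-i) x₂^i`. -/
def subst5 (p q r s : R) (a : Fin 6 → R) : Fin 6 → R :=
  ![
    a 0 * p ^ 5
      + a 1 * p ^ 4 * r
      + a 2 * p ^ 3 * r ^ 2
      + a 3 * p ^ 2 * r ^ 3
      + a 4 * p * r ^ 4
      + a 5 * r ^ 5,
    a 0 * 5 * p ^ 4 * q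
      + a 1 * (4 * p ^ 3 * q * r + p ^ 4 * s)
      + a 2 * (3 * p ^ 2 * q * r ^ 2 + 2 * p ^ 3 * r * s)
      + a 3 * (2 * p * q * r ^ 3 + 3 * p ^ 2 * r ^ 2 * s)
      + a 4 * (q * r ^ 4 + 4 * p * r ^ 3 * s)
      + a 5 * 5 * r ^ 4 * s,
    a 0 * 10 * p ^ 3 * q ^ 2
      + a 1 * (6 * p ^ 2 * q ^ 2 * r + 4 * p ^ 3 * q * s)
      + a 2 * (3 * p * q ^ 2 * r ^ 2 + 6 * p ^ 2 * q * r * s + p ^ 3 * s ^ 2)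
      + a 3 * (q ^ 2 * r ^ 3 + 6 * p * q * r ^ 2 * s + 3 * p ^ 2 * r * s ^ 2)
      + a 4 * (4 * q * r ^ 3 * s + 6 * p * r ^ 2 * s ^ 2)
      + a 5 * 10 * r ^ 3 * s ^ 2,
    a 0 * 10 * p ^ 2 * q ^ 3
      + a 1 * (4 * p * q ^ 3 * r + 6 * p ^ 2 * q ^ 2 * s)
      + a 2 * (q ^ 3 * r ^ 2 + 6 * p * q ^ 2 * r * s + 3 * p ^ 2 * q * s ^ 2)
      + a 3 * (3 * q ^ 2 * r ^ 2 * s + 6 * p * q * r * s ^ 2 + p ^ 2 * s ^ 3)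
      + a 4 * (6 * q * r ^ 2 * s ^ 2 + 4 * p * r * s ^ 3)
      + a 5 * 10 * r ^ 2 * s ^ 3,
    a 0 * 5 * p * q ^ 4
      + a 1 * (q ^ 4 * r + 4 * p * q ^ 3 * s)
      + a 2 * (2 * q ^ 3 * r * s + 3 * p * q ^ 2 * s ^ 2)
      + a 3 * (3 * q ^ 2 * r * s ^ 2 + 2 * p * q * s ^ 3)
      + a 4 * (4 * q * r * s ^ 3 + p * s ^ 4)
      + a 5 * 5 * r * s ^ 4,
    a 0 * q ^ 5
      + a 1 * q ^ 4 * s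
      + a 2 * q ^ 3 * s ^ 2
      + a 3 * q ^ 2 * s ^ 3
      + a 4 * q * s ^ 4
      + a 5 * s ^ 5]

/-- Leading coefficient of the quadratic covariant `C₁`, proportional to `(F,F)₄`. -/
def cA (a : Fin 6 → R) : R := 20 * a 0 * a 4 - 8 * a 1 * a 3 + 3 * a 2 ^ 2
/-- Middle coefficient of the quadratic covariant `C₁`. -/
def cB (a : Fin 6 → R) : R := 100 * a 0 * a 5 - 12 * a 1 * a 4 + 2 * a 2 * a 3
/-- Last coefficient of the quadratic covariant `C₁`. -/
def cC (a : Fin 6 → R) : R := 20 * a 1 * a 5 - 8 * a 2 * a 4 + 3 * a 3 ^ 2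

/-- Coefficient of `x₁³` in the cubic covariant `C₂`, proportional to `(F,C₁)₂`. -/
def dA (a : Fin 6 → R) : R := 10 * a 0 * cC a - 2 * a 1 * cB a + a 2 * cA a
/-- Coefficient of `x₁² x₂` in the cubic covariant `C₂`. -/
def dB (a : Fin 6 → R) : R := 6 * a 1 * cC a - 3 * a 2 * cB a + 3 * a 3 * cA a
/-- Coefficient of `x₁ x₂²` in the cubic covariant `C₂`. -/
def dC (a : Fin 6 → R) : R := 3 * a 2 * cC a - 3 * a 3 * cB a + 6 * a 4 * cA a
/-- Coefficient of `x₂³` in the cubic covariant `C₂`. -/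
def dD (a : Fin 6 → R) : R := a 3 * cC a - 2 * a 4 * cB a + 10 * a 5 * cA a

/-- Leading coefficient of `C₃`, proportional to the Hessian of the cubic covariant `C₂`. -/
def eA (a : Fin 6 → R) : R := dB a ^ 2 - 3 * dA a * dC a
/-- Middle coefficient of the quadratic covariant `C₃`. -/
def eB (a : Fin 6 → R) : R := dB a * dC a - 9 * dA a * dD a
/-- Last coefficient of the quadratic covariant `C₃`. -/
def eC (a : Fin 6 → R) : R := dC a ^ 2 - 3 * dB a * dD a

/-- The degree `4` invariant: the discriminant of `C₁`. -/
def jInv (a : Fin 6 → R) : R := cB a ^ 2 - 4 * cA a * cC a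
/-- The degree `8` invariant: the polarised discriminant of `C₁` and `C₃`. -/
def kInv (a : Fin 6 → R) : R := cB a * eB a - 2 * cA a * eC a - 2 * cC a * eA a
/-- The degree `12` invariant: the discriminant of `C₃`, which is a constant multiple of the
discriminant of `C₂`. -/
def lInv (a : Fin 6 → R) : R := eB a ^ 2 - 4 * eA a * eC a

variable (p q r s : R) (a : Fin 6 → R)

lemma cA_subst5 : cA (subst5 p q r s a) =
    (p * s - q * r) ^ 4 * (cA a * p ^ 2 + cB a * p * r + cC a * r ^ 2) := by
  simp [cA, cB, cC, subst5]; ring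

lemma cB_subst5 : cB (subst5 p q r s a) =
    (p * s - q * r) ^ 4 * (2 * cA a * p * q + cB a * (p * s + q * r) + 2 * cC a * r * s) := by
  simp [cA, cB, cC, subst5]; ring

lemma cC_subst5 : cC (subst5 p q r s a) =
    (p * s - q * r) ^ 4 * (cA a * q ^ 2 + cB a * q * s + cC a * s ^ 2) := by
  simp [cA, cB, cC, subst5]; ring

lemma dA_subst5 : dA (subst5 p q r s a) = (p * s - q * r) ^ 6 *
    (dA a * p ^ 3 + dB a * p ^ 2 * r + dC a * p * r ^ 2 + dD a * r ^ 3) := by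
  simp only [dA, cA_subst5, cB_subst5, cC_subst5, dB, dC, dD]
  simp [subst5]; ring

lemma dB_subst5 : dB (subst5 p q r s a) = (p * s - q * r) ^ 6 *
    (3 * dA a * p ^ 2 * q + dB a * (p ^ 2 * s + 2 * p * q * r)
      + dC a * (2 * p * r * s + q * r ^ 2) + 3 * dD a * r ^ 2 * s) := by
  simp only [dA, cA_subst5, cB_subst5, cC_subst5, dB, dC, dD]
  simp [subst5]; ring

lemma dC_subst5 : dC (subst5 p q r s a) = (p * s - q * r) ^ 6 *
    (3 * dA a * p * q ^ 2 + dB a * (2 * p * q * s + q ^ 2 * r)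
      + dC a * (p * s ^ 2 + 2 * q * r * s) + 3 * dD a * r * s ^ 2) := by
  simp only [dA, cA_subst5, cB_subst5, cC_subst5, dB, dC, dD]
  simp [subst5]; ring

lemma dD_subst5 : dD (subst5 p q r s a) = (p * s - q * r) ^ 6 *
    (dA a * q ^ 3 + dB a * q ^ 2 * s + dC a * q * s ^ 2 + dD a * s ^ 3) := by
  simp only [dA, cA_subst5, cB_subst5, cC_subst5, dB, dC, dD]
  simp [subst5]; ring

variable {p q r s}

lemma jInv_subst5 (h : p * s - q * r = 1) : jInv (subst5 p q r s a) = jInv a := by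
  have : jInv (subst5 p q r s a) = (p * s - q * r) ^ 10 * jInv a := by
    simp only [jInv, cA_subst5, cB_subst5, cC_subst5]; ring
  rw [this, h, one_pow, one_mul]

lemma eA_subst5 (h : p * s - q * r = 1) : eA (subst5 p q r s a) =
    eA a * p ^ 2 + eB a * p * r + eC a * r ^ 2 := by
  have : eA (subst5 p q r s a) =
      (p * s - q * r) ^ 14 * (eA a * p ^ 2 + eB a * p * r + eC a * r ^ 2) := by
    simp only [eA, eB, eC, dA_subst5, dB_subst5, dC_subst5]; ring
  rw [this, h, one_pow, one_mul]

lemma eB_subst5 (h : p * s - q * r = 1) : eB (subst5 p q r s a) =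
    2 * eA a * p * q + eB a * (p * s + q * r) + 2 * eC a * r * s := by
  have : eB (subst5 p q r s a) = (p * s - q * r) ^ 14 *
      (2 * eA a * p * q + eB a * (p * s + q * r) + 2 * eC a * r * s) := by
    simp only [eA, eB, eC, dA_subst5, dB_subst5, dC_subst5, dD_subst5]; ring
  rw [this, h, one_pow, one_mul]

lemma eC_subst5 (h : p * s - q * r = 1) : eC (subst5 p q r s a) =
    eA a * q ^ 2 + eB a * q * s + eC a * s ^ 2 := by
  have : eC (subst5 p q r s a) =
      (p * s - q * r) ^ 14 * (eA a * q ^ 2 + eB a * q * s + eC a * s ^ 2) := by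
    simp only [eA, eB, eC, dB_subst5, dC_subst5, dD_subst5]; ring
  rw [this, h, one_pow, one_mul]

lemma kInv_subst5 (h : p * s - q * r = 1) : kInv (subst5 p q r s a) = kInv a := by
  have : kInv (subst5 p q r s a) = (p * s - q * r) ^ 6 * kInv a := by
    simp only [kInv, cA_subst5, cB_subst5, cC_subst5, eA_subst5 a h, eB_subst5 a h,
      eC_subst5 a h]
    ring
  rw [this, h, one_pow, one_mul]

lemma lInv_subst5 (h : p * s - q * r = 1) : lInv (subst5 p q r s a) = lInv a := by
  have : lInv (subst5 p q r s a) = (p * s - q * r) ^ 2 * lInv a := by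
    simp only [lInv, eA_subst5 a h, eB_subst5 a h, eC_subst5 a h]
    ring
  rw [this, h, one_pow, one_mul]

/-- The coefficients of the Sylvester form `u x₁⁵ + v x₂⁵ - w (x₁ + x₂)⁵`. -/
def sylv (u v w : R) : Fin 6 → R := ![u - w, -5 * w, -10 * w, -10 * w, -5 * w, v - w]

lemma jInv_sylv (u v w : R) : jInv (sylv u v w) =
    10000 * ((u * v + v * w + w * u) ^ 2 - 4 * (u + v + w) * (u * v * w)) := by
  simp [jInv, cA, cB, cC, sylv]; ring

lemma kInv_sylv (u v w : R) : kInv (sylv u v w) =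
    9 * 10 ^ 8 * ((u * v * w) ^ 2 * (u * v + v * w + w * u)) := by
  simp [kInv, eA, eB, eC, dA, dB, dC, dD, cA, cB, cC, sylv]; ring

lemma lInv_sylv (u v w : R) : lInv (sylv u v w) =
    -(243 * 10 ^ 12 * (u * v * w) ^ 4) := by
  simp [lInv, eA, eB, eC, dA, dB, dC, dD, cA, cB, cC, sylv]; ring

/-- The three coefficients of the third transvectant `(F,C₂)₃` vanish: `C₂` is apolar to `F`. -/
lemma apolar (a : Fin 6 → R) :
    10 * a 0 * dD a - 2 * a 1 * dC a + a 2 * dB a - a 3 * dA a = 0 ∧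
    2 * a 1 * dD a - a 2 * dC a + a 3 * dB a - 2 * a 4 * dA a = 0 ∧
    a 2 * dD a - a 3 * dC a + 2 * a 4 * dB a - 10 * a 5 * dA a = 0 := by
  refine ⟨?_, ?_, ?_⟩ <;> simp only [dA, dB, dC, dD, cA, cB, cC] <;> ring

lemma jInv_degenerate (b c : R) : jInv ![1, 0, 0, 0, b, c] = 10000 * c ^ 2 := by
  simp [jInv, cA, cB, cC]; ring

lemma kInv_degenerate (b c : R) : kInv ![1, 0, 0, 0, b, c] = -(576000 * b ^ 5) := by
  simp [kInv, eA, eB, eC, dA, dB, dC, dD, cA, cB, cC]; ring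

lemma lInv_degenerate (b c : R) : lInv ![1, 0, 0, 0, b, c] = 0 := by
  simp [lInv, eA, eB, eC, dA, dB, dC, dD, cA, cB, cC]

variable {S : Type*} [CommRing S] (f : R →+* S)

lemma map_jInv (a : Fin 6 → R) : f (jInv a) = jInv (f ∘ a) := by
  simp [jInv, cA, cB, cC, Function.comp, map_ofNat]

lemma map_kInv (a : Fin 6 → R) : f (kInv a) = kInv (f ∘ a) := by
  simp [kInv, eA, eB, eC, dA, dB, dC, dD, cA, cB, cC, Function.comp, map_ofNat]

lemma map_lInv (a : Fin 6 → R) : f (lInv a) = lInv (f ∘ a) := by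
  simp [lInv, eA, eB, eC, dA, dB, dC, dD, cA, cB, cC, Function.comp, map_ofNat]

end Covariants

/-! ### Reduction to Sylvester forms -/

lemma qcoeffs_formOf (a : Fin 6 → ℂ) : qcoeffs (formOf a) = a := by
  have hmon : ∀ i : Fin 6, (C (a i) * X 0 ^ (5 - (i : ℕ)) * X 1 ^ (i : ℕ) : P2) =
      monomial (Finsupp.single 0 (5 - (i : ℕ)) + Finsupp.single 1 (i : ℕ)) (a i) := by
    intro i
    rw [mul_assoc, X_pow_eq_monomial, X_pow_eq_monomial, monomial_mul, C_mul_monomial]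
    simp
  funext k
  simp only [qcoeffs, mcoeff, formOf, hmon, coeff_sum, coeff_monomial]
  rw [Finset.sum_eq_single k]
  · simp
  · intro b _ hbk
    rw [if_neg]
    intro h
    apply hbk
    have := DFunLike.congr_fun h 1
    simp at this
    exact Fin.ext this
  · simp

lemma actSL_formOf (g : Matrix.SpecialLinearGroup (Fin 2) ℂ) (a : Fin 6 → ℂ) :
    qcoeffs (actSL g (formOf a)) = subst5 (g⁻¹.1 0 0) (g⁻¹.1 0 1) (g⁻¹.1 1 0) (g⁻¹.1 1 1) a := by
  rw [← qcoeffs_formOf (subst5 _ _ _ _ a)]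
  congr 1
  generalize hm : g⁻¹ = m
  simp only [actSL, formOf, hm, Fin.sum_univ_succ, Fin.sum_univ_zero]
  simp [subst5, map_ofNat]
  ring

/-- Invariance in terms of explicit substitutions of determinant one. -/
lemma mem_invariantSubmodule_iff (P : MvPolynomial (Fin 6) ℂ) :
    P ∈ invariantSubmodule ↔ ∀ (p q r s : ℂ) (_ : p * s - q * r = 1) (a : Fin 6 → ℂ),
      eval (subst5 p q r s a) P = eval a P := by
  have hae : ∀ (a : Fin 6 → ℂ) (P : MvPolynomial (Fin 6) ℂ), aeval a P = eval a P := by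
    intro a P
    rw [← coe_aeval_eq_eval]; rfl
  simp only [invariantSubmodule, Submodule.mem_iInf, LinearMap.mem_ker, LinearMap.sub_apply,
    AlgHom.toLinearMap_apply, sub_eq_zero, actSL_formOf, hae]
  constructor
  · intro h p q r s hd a
    let G : Matrix.SpecialLinearGroup (Fin 2) ℂ :=
      ⟨!![p, q; r, s], by rw [Matrix.det_fin_two_of]; exact hd⟩
    have := h G⁻¹ a
    rw [inv_inv] at this
    simpa [G] using this
  · intro h g a
    refine h _ _ _ _ ?_ a
    have := g⁻¹.2
    rwa [Matrix.det_fin_two] at this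

/-- A form with nonvanishing degree `12` invariant is brought by unimodular substitutions to
Sylvester form, so an invariant vanishing on Sylvester forms vanishes on it. The substitutions
move the roots of the cubic covariant `C₂` so that it becomes a multiple of `x₁ x₂ (x₁ + x₂)`,
and apolarity then forces the shape of the quintic. -/
lemma eval_eq_zero_of_sylv {P : MvPolynomial (Fin 6) ℂ} (hP : P ∈ invariantSubmodule)
    (h : ∀ u v w : ℂ, eval (sylv u v w) P = 0) (a : Fin 6 → ℂ) (ha : lInv a ≠ 0) :
    eval a P = 0 := by
  rw [mem_invariantSubmodule_iff] at hP
  -- `C₂` with the three coefficient conditions of `κ x₁ x₂ (x₁ + x₂)`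
  have h3 : ∀ a : Fin 6 → ℂ, lInv a ≠ 0 → dA a = 0 → dD a = 0 → dB a = dC a → eval a P = 0 := by
    intro a ha hA hD hBC
    have hC : dC a ≠ 0 := by
      intro hC
      apply ha
      simp [lInv, eA, eB, eC, hA, hD, hBC, hC]
    obtain ⟨h1, h2, h3⟩ := apolar a
    rw [hA, hD, hBC] at h1 h2 h3
    have e1 : a 2 = 2 * a 1 := mul_right_cancel₀ hC (by linear_combination h1)
    have e2 : a 3 = a 2 := mul_right_cancel₀ hC (by linear_combination h2)
    have e3 : a 3 = 2 * a 4 := mul_right_cancel₀ hC (by linear_combination -h3)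
    have : a = sylv (a 0 - a 1 / 5) (a 5 - a 1 / 5) (-(a 1 / 5)) := by
      funext i
      fin_cases i
      · simp [sylv]
      · simp [sylv]; ring
      · simp [sylv]; linear_combination e1
      · simp [sylv]; linear_combination e1 + e2
      · simp [sylv]; linear_combination (e1 + e2 - e3) / 2
      · simp [sylv]
    rw [this]
    exact h _ _ _
  -- two roots at `0` and `∞`: a diagonal substitution equalises the remaining coefficients
  have h2 : ∀ a : Fin 6 → ℂ, lInv a ≠ 0 → dA a = 0 → dD a = 0 → eval a P = 0 := by
    intro a ha hA hD
    have hB : dB a ≠ 0 := by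
      intro hB
      apply ha
      simp [lInv, eA, eB, eC, hA, hD, hB]
    have hC : dC a ≠ 0 := by
      intro hC
      apply ha
      simp [lInv, eA, eB, eC, hA, hD, hC]
    obtain ⟨t, ht⟩ := IsAlgClosed.exists_pow_nat_eq (dC a / dB a) (n := 2) (by norm_num)
    have ht0 : t ≠ 0 := by
      rintro rfl
      have : dC a / dB a ≠ 0 := div_ne_zero hC hB
      exact this (by rw [← ht]; simp)
    have hd : t * t⁻¹ - 0 * 0 = 1 := by simp [ht0]
    rw [← hP t 0 0 t⁻¹ hd a]
    apply h3
    · rwa [lInv_subst5 a hd]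
    · rw [dA_subst5]; simp [hA]
    · rw [dD_subst5]; simp [hD]
    · rw [dB_subst5, dC_subst5]
      have : dC a = t ^ 2 * dB a := by rw [ht]; field_simp
      rw [this]
      field_simp
      ring
  -- one root at `∞`: a translation moves a second one to `0`
  have h1 : ∀ a : Fin 6 → ℂ, lInv a ≠ 0 → dA a = 0 → eval a P = 0 := by
    intro a ha hA
    have hB : dB a ≠ 0 := by
      intro hB
      apply ha
      simp [lInv, eA, eB, eC, hA, hB]
    obtain ⟨t, ht⟩ : ∃ t : ℂ, dB a * t ^ 2 + dC a * t + dD a = 0 := by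
      obtain ⟨t, ht⟩ := IsAlgClosed.exists_root
        (Polynomial.C (dB a) * Polynomial.X ^ 2 + Polynomial.C (dC a) * Polynomial.X
          + Polynomial.C (dD a)) (by rw [Polynomial.degree_quadratic hB]; norm_num)
      exact ⟨t, by simpa using ht⟩
    have hd : (1 : ℂ) * 1 - t * 0 = 1 := by simp
    rw [← hP 1 t 0 1 hd a]
    apply h2
    · rwa [lInv_subst5 a hd]
    · rw [dA_subst5]; simp [hA]
    · rw [dD_subst5, hA]
      linear_combination (1 * 1 - t * 0) ^ 6 * ht
  by_cases hA : dA a = 0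
  · exact h1 a ha hA
  obtain ⟨t, ht⟩ : ∃ t : ℂ, dA a * t ^ 3 + dB a * t ^ 2 + dC a * t + dD a = 0 := by
    obtain ⟨t, ht⟩ := IsAlgClosed.exists_root
      (Polynomial.C (dA a) * Polynomial.X ^ 3 + Polynomial.C (dB a) * Polynomial.X ^ 2
        + Polynomial.C (dC a) * Polynomial.X + Polynomial.C (dD a))
      (by rw [Polynomial.degree_cubic hA]; norm_num)
    exact ⟨t, by simpa using ht⟩
  have hd : t * 0 - (-1) * 1 = 1 := by simp
  rw [← hP t (-1) 1 0 hd a]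
  apply h1
  · rwa [lInv_subst5 a hd]
  · rw [dA_subst5]
    linear_combination (t * 0 - (-1) * 1) ^ 6 * ht

/-- The invariants `jInv`, `kInv`, `lInv` as polynomials in the coefficients. -/
def jkl : Fin 3 → MvPolynomial (Fin 6) ℂ := ![jInv X, kInv X, lInv X]

lemma eval_comp_X (a : Fin 6 → ℂ) : (eval a : MvPolynomial (Fin 6) ℂ →+* ℂ) ∘ X = a := by
  funext i; simp

lemma eval_jInv (a : Fin 6 → ℂ) : eval a (jInv X) = jInv a := by rw [map_jInv, eval_comp_X]
lemma eval_kInv (a : Fin 6 → ℂ) : eval a (kInv X) = kInv a := by rw [map_kInv, eval_comp_X]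
lemma eval_lInv (a : Fin 6 → ℂ) : eval a (lInv X) = lInv a := by rw [map_lInv, eval_comp_X]

lemma lInv_ne_zero : (lInv X : MvPolynomial (Fin 6) ℂ) ≠ 0 := by
  intro h
  have := eval_lInv (sylv 1 1 1)
  rw [h, lInv_sylv] at this
  norm_num at this

/-- Invariants are determined by their restriction to Sylvester forms. -/
lemma eq_zero_of_sylv {P : MvPolynomial (Fin 6) ℂ} (hP : P ∈ invariantSubmodule)
    (h : ∀ u v w : ℂ, eval (sylv u v w) P = 0) : P = 0 := by
  have : P * lInv X = 0 := by
    apply MvPolynomial.funext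
    intro a
    rw [map_mul, eval_lInv, map_zero]
    by_cases ha : lInv a = 0
    · rw [ha, mul_zero]
    · rw [eval_eq_zero_of_sylv hP h a ha, zero_mul]
  exact (mul_eq_zero.1 this).resolve_right lInv_ne_zero

lemma eval_aeval_jkl (a : Fin 6 → ℂ) (g : MvPolynomial (Fin 3) ℂ) :
    eval a (aeval jkl g) = eval ![jInv a, kInv a, lInv a] g := by
  induction g using MvPolynomial.induction_on with
  | C c => simp
  | add f g hf hg => simp only [map_add, hf, hg]
  | mul_X f i hf =>
    simp only [map_mul, hf, aeval_X, eval_X]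
    congr 1
    fin_cases i
    · simp [jkl, eval_jInv]
    · simp [jkl, eval_kInv]
    · simp [jkl, eval_lInv]

lemma aeval_jkl_mem (g : MvPolynomial (Fin 3) ℂ) : aeval jkl g ∈ invariantSubmodule := by
  rw [mem_invariantSubmodule_iff]
  intro p q r s h a
  rw [eval_aeval_jkl, eval_aeval_jkl, jInv_subst5 a h, kInv_subst5 a h, lInv_subst5 a h]

/-! ### Algebraic independence and division by the invariant of degree 12 -/

lemma X_two_dvd {g : MvPolynomial (Fin 3) ℂ} (h : ∀ j k : ℂ, eval ![j, k, 0] g = 0) :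
    X 2 ∣ g := by
  have hdiv : ∀ g : MvPolynomial (Fin 3) ℂ,
      X 2 ∣ g - aeval (![X 0, X 1, 0] : Fin 3 → MvPolynomial (Fin 3) ℂ) g := by
    intro g
    induction g using MvPolynomial.induction_on with
    | C c => simp
    | add f g hf hg =>
      rw [map_add, add_sub_add_comm]
      exact dvd_add hf hg
    | mul_X f i hf =>
      have hi : X 2 ∣ X i - (![X 0, X 1, 0] : Fin 3 → MvPolynomial (Fin 3) ℂ) i := by
        fin_cases i <;> simp
      rw [map_mul, aeval_X]
      convert dvd_add (Dvd.dvd.mul_right hf (X i)) (Dvd.dvd.mul_left hi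
        (aeval (![X 0, X 1, 0] : Fin 3 → MvPolynomial (Fin 3) ℂ) f)) using 1
      ring
  have h0 : aeval (![X 0, X 1, 0] : Fin 3 → MvPolynomial (Fin 3) ℂ) g = 0 := by
    apply MvPolynomial.funext
    intro x
    have : eval x (aeval (![X 0, X 1, 0] : Fin 3 → MvPolynomial (Fin 3) ℂ) g)
        = eval ![x 0, x 1, 0] g := by
      generalize g = g
      induction g using MvPolynomial.induction_on with
      | C c => simp
      | add f g hf hg => simp only [map_add, hf, hg]
      | mul_X f i hf =>
        simp only [map_mul, hf, aeval_X, eval_X]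
        congr 1
        fin_cases i <;> simp
    rw [this, h, map_zero]
  have := hdiv g
  rwa [h0, sub_zero] at this

/-- On the locus `lInv = 0` the other two invariants take all pairs of values (already on the
quintics `x₁⁵ + b x₁ x₂⁴ + c x₂⁵`), so `lInv` divides a polynomial in the three invariants only
if the third variable divides that polynomial. -/
lemma X_two_dvd_of_lInv_dvd {g : MvPolynomial (Fin 3) ℂ} (h : lInv X ∣ aeval jkl g) :
    X 2 ∣ g := by
  obtain ⟨Q, hQ⟩ := h
  apply X_two_dvd
  intro j k
  obtain ⟨c, hc⟩ := IsAlgClosed.exists_pow_nat_eq (j / 10000) (n := 2) (by norm_num)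
  obtain ⟨b, hb⟩ := IsAlgClosed.exists_pow_nat_eq (-k / 576000) (n := 5) (by norm_num)
  have := eval_aeval_jkl ![1, 0, 0, 0, b, c] g
  rw [hQ, map_mul, eval_lInv, jInv_degenerate, kInv_degenerate, lInv_degenerate, zero_mul,
    hc, hb] at this
  have e1 : 10000 * (j / 10000) = j := by ring
  have e2 : -(576000 * (-k / 576000)) = k := by ring
  rw [e1, e2] at this
  exact this.symm

lemma aeval_jkl_X_two_mul (g : MvPolynomial (Fin 3) ℂ) :
    aeval jkl (X 2 * g) = lInv X * aeval jkl g := by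
  rw [map_mul, aeval_X]; rfl

/-- The three invariants are algebraically independent. -/
lemma aeval_jkl_injective : Function.Injective (aeval (R := ℂ) jkl) := by
  rw [injective_iff_map_eq_zero]
  intro g hg
  by_contra hne
  have hdvd : ∀ n : ℕ, (X 2 : MvPolynomial (Fin 3) ℂ) ^ n ∣ g := by
    have key : ∀ n : ℕ, ∃ h, g = (X 2 : MvPolynomial (Fin 3) ℂ) ^ n * h ∧ aeval jkl h = 0 := by
      intro n
      induction n with
      | zero => exact ⟨g, by simp, hg⟩
      | succ n ih =>
        obtain ⟨h, h1, h2⟩ := ih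
        obtain ⟨h', rfl⟩ := X_two_dvd_of_lInv_dvd (g := h) (by rw [h2]; exact dvd_zero _)
        refine ⟨h', by rw [h1]; ring, ?_⟩
        rw [aeval_jkl_X_two_mul] at h2
        exact (mul_eq_zero.1 h2).resolve_left lInv_ne_zero
    intro n
    obtain ⟨h, h1, -⟩ := key n
    exact ⟨h, h1⟩
  have hfin : FiniteMultiplicity (X 2 : MvPolynomial (Fin 3) ℂ) g :=
    FiniteMultiplicity.of_prime_left (X_prime (i := 2)) hne
  obtain ⟨n, hn⟩ := hfin
  exact hn (hdvd _)

/-- Powers of `lInv` can be cancelled in the algebra generated by the three invariants. -/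
lemma mem_of_lInv_pow_mul (m : ℕ) : ∀ (P : MvPolynomial (Fin 6) ℂ) (g : MvPolynomial (Fin 3) ℂ),
    lInv X ^ m * P = aeval jkl g → ∃ g' : MvPolynomial (Fin 3) ℂ, P = aeval jkl g' := by
  induction m with
  | zero => intro P g h; exact ⟨g, by simpa using h⟩
  | succ m ih =>
    intro P g h
    obtain ⟨g', rfl⟩ := X_two_dvd_of_lInv_dvd (g := g) ⟨lInv X ^ m * P, by rw [← h]; ring⟩
    apply ih P g'
    apply mul_left_cancel₀ lInv_ne_zero
    rw [← aeval_jkl_X_two_mul, ← h]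
    ring

/-- A polynomial in homogeneous polynomials of degrees `w i`: its homogeneous components come
from the weighted homogeneous ones. -/
lemma homogeneousComponent_aeval {σ : Type*} (φ : Fin 3 → MvPolynomial σ ℂ) (w : Fin 3 → ℕ)
    (hφ : ∀ i, (φ i).IsHomogeneous (w i)) (D : ℕ) (g : MvPolynomial (Fin 3) ℂ) :
    homogeneousComponent D (aeval φ g) = aeval φ (weightedHomogeneousComponent w D g) := by
  classical
  induction g using MvPolynomial.induction_on' with
  | add p q hp hq => simp only [map_add, hp, hq]
  | monomial d c =>
    have hom : (aeval φ (monomial d c)).IsHomogeneous (Finsupp.weight w d) := by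
      rw [aeval_monomial, algebraMap_eq, ← zero_add (Finsupp.weight w d)]
      refine (isHomogeneous_C _ _).mul ?_
      rw [Finsupp.weight_apply, Finsupp.prod, Finsupp.sum]
      refine IsHomogeneous.prod _ _ _ fun i _ => ?_
      have := (hφ i).pow (d i)
      rwa [mul_comm] at this
    have hw : (monomial d c).IsWeightedHomogeneous w (Finsupp.weight w d) :=
      isWeightedHomogeneous_monomial w d c rfl
    rw [homogeneousComponent_of_mem hom, weightedHomogeneousComponent_of_mem hw]
    split_ifs <;> simp

/-! ### Restriction to Sylvester forms and symmetric polynomials -/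

/-- Restriction of a polynomial in the coefficients of the quintic to the Sylvester forms
`u x₁⁵ + v x₂⁵ - w (x₁ + x₂)⁵`, as a polynomial in `u, v, w`. -/
def res : MvPolynomial (Fin 6) ℂ →ₐ[ℂ] MvPolynomial (Fin 3) ℂ :=
  aeval (sylv (X 0) (X 1) (X 2))

lemma eval_res (x : Fin 3 → ℂ) (P : MvPolynomial (Fin 6) ℂ) :
    eval x (res P) = eval (sylv (x 0) (x 1) (x 2)) P := by
  unfold res
  induction P using MvPolynomial.induction_on with
  | C c => simp
  | add f g hf hg => simp only [map_add, hf, hg]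
  | mul_X f i hf =>
    rw [map_mul, map_mul, map_mul, hf, aeval_X, eval_X]
    congr 1
    fin_cases i <;> simp [sylv]

lemma res_isHomogeneous {P : MvPolynomial (Fin 6) ℂ} {n : ℕ} (h : P.IsHomogeneous n) :
    (res P).IsHomogeneous n := by
  have hX : ∀ i : Fin 3, (X i : MvPolynomial (Fin 3) ℂ).IsHomogeneous 1 := isHomogeneous_X ℂ
  have hc : ∀ c : ℂ, (C c * X 2 : MvPolynomial (Fin 3) ℂ).IsHomogeneous 1 := fun c => by
    simpa using (isHomogeneous_C (Fin 3) c).mul (hX 2)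
  have h5 : (-(5 * X 2) : MvPolynomial (Fin 3) ℂ).IsHomogeneous 1 := by
    have := (hc 5).neg; rwa [map_ofNat] at this
  have h10 : (-(10 * X 2) : MvPolynomial (Fin 3) ℂ).IsHomogeneous 1 := by
    have := (hc 10).neg; rwa [map_ofNat] at this
  have := h.aeval (sylv (X 0) (X 1) (X 2) : Fin 6 → MvPolynomial (Fin 3) ℂ) (n := 1) (by
    intro i
    fin_cases i <;> simp [sylv, h5, h10, (hX _).sub (hX _)])
  simpa [res] using this

lemma eval_smul_of_isHomogeneous {σ : Type*} {P : MvPolynomial σ ℂ} {n : ℕ}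
    (h : P.IsHomogeneous n) (c : ℂ) (a : σ → ℂ) : eval (c • a) P = c ^ n * eval a P := by
  rw [eval_eq, eval_eq, Finset.mul_sum]
  refine Finset.sum_congr rfl fun d hd => ?_
  have hd' : ∑ i ∈ d.support, d i = n := by
    have := h (mem_support_iff.mp hd)
    simpa [Finsupp.weight_apply, Finsupp.sum] using this
  simp only [Pi.smul_apply, smul_eq_mul, mul_pow, Finset.prod_mul_distrib, Finset.prod_pow_eq_pow_sum]
  rw [hd']
  ring

lemma I_pow_five : Complex.I ^ 5 = Complex.I := by
  linear_combination (Complex.I ^ 3 - Complex.I) * Complex.I_sq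

/-- The substitution `(x₁, x₂) ↦ (i x₂, i x₁)`, of determinant `1`, exchanges `u` and `v`. -/
lemma subst5_sylv_uv (u v w : ℂ) : subst5 0 Complex.I Complex.I 0 (sylv u v w)
    = Complex.I • sylv v u w := by
  ext i
  fin_cases i <;> simp [subst5, sylv] <;> ring_nf

/-- The substitution `(x₁, x₂) ↦ (i x₁, -i x₁ - i x₂)`, of determinant `1`, exchanges
`v` and `w`. -/
lemma subst5_sylv_vw (u v w : ℂ) : subst5 Complex.I 0 (-Complex.I) (-Complex.I) (sylv u v w)
    = Complex.I • sylv u w v := by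
  have h := I_pow_five
  have h3 : Complex.I ^ 3 = -Complex.I := by linear_combination Complex.I * Complex.I_sq
  ext i
  fin_cases i <;> simp [subst5, sylv] <;> ring_nf <;>
    simp only [h, h3] <;> ring

/-- The Sylvester restriction of an invariant of degree divisible by `4` is symmetric. -/
lemma res_isSymmetric {P : MvPolynomial (Fin 6) ℂ} (hP : P ∈ invariantSubmodule) {n : ℕ}
    (hn : 4 ∣ n) (h : P.IsHomogeneous n) : (res P).IsSymmetric := by
  have hI : Complex.I ^ n = 1 := by
    obtain ⟨k, rfl⟩ := hn
    rw [pow_mul, Complex.I_pow_four, one_pow]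
  rw [mem_invariantSubmodule_iff] at hP
  have h01 : ∀ u v w : ℂ, eval (sylv v u w) P = eval (sylv u v w) P := fun u v w => by
    rw [← hP 0 Complex.I Complex.I 0 (by simp) (sylv u v w), subst5_sylv_uv,
      eval_smul_of_isHomogeneous h, hI, one_mul]
  have h12 : ∀ u v w : ℂ, eval (sylv u w v) P = eval (sylv u v w) P := fun u v w => by
    rw [← hP Complex.I 0 (-Complex.I) (-Complex.I) (by simp) (sylv u v w),
      subst5_sylv_vw, eval_smul_of_isHomogeneous h, hI, one_mul]
  have h02 : ∀ u v w : ℂ, eval (sylv w v u) P = eval (sylv u v w) P := fun u v w => by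
    rw [h01 v w u, h12 v u w, h01]
  intro e
  refine MvPolynomial.funext fun x => ?_
  rw [eval_rename, eval_res, eval_res]
  have key : (e 0 = 0 ∧ e 1 = 1 ∧ e 2 = 2) ∨ (e 0 = 0 ∧ e 1 = 2 ∧ e 2 = 1) ∨
      (e 0 = 1 ∧ e 1 = 0 ∧ e 2 = 2) ∨ (e 0 = 1 ∧ e 1 = 2 ∧ e 2 = 0) ∨
      (e 0 = 2 ∧ e 1 = 0 ∧ e 2 = 1) ∨ (e 0 = 2 ∧ e 1 = 1 ∧ e 2 = 0) := by
    revert e; decide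
  simp only [Function.comp_apply]
  rcases key with ⟨h0, h1, h2⟩ | ⟨h0, h1, h2⟩ | ⟨h0, h1, h2⟩ | ⟨h0, h1, h2⟩ | ⟨h0, h1, h2⟩ |
    ⟨h0, h1, h2⟩ <;> rw [h0, h1, h2]
  · exact h12 _ _ _
  · exact h01 _ _ _
  · exact (h12 _ _ _).trans (h01 _ _ _)
  · exact (h01 _ _ _).trans (h12 _ _ _)
  · exact h02 _ _ _

/-- The product `u v w`. -/
def e3 : MvPolynomial (Fin 3) ℂ := X 0 * X 1 * X 2
/-- The second elementary symmetric polynomial in `u, v, w`. -/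
def e2 : MvPolynomial (Fin 3) ℂ := X 0 * X 1 + X 1 * X 2 + X 2 * X 0
/-- The sum `u + v + w`. -/
def e1 : MvPolynomial (Fin 3) ℂ := X 0 + X 1 + X 2

lemma esymm_one_eq : esymm (Fin 3) ℂ 1 = e1 := by
  rw [esymm_one, Fin.sum_univ_three, e1]

lemma esymm_two_eq : esymm (Fin 3) ℂ 2 = e2 := by
  rw [esymm, show Finset.powersetCard 2 (Finset.univ : Finset (Fin 3))
    = {{0, 1}, {1, 2}, {2, 0}} by decide]
  rw [Finset.sum_insert (by decide), Finset.sum_insert (by decide), Finset.sum_singleton]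
  rw [Finset.prod_pair (by decide), Finset.prod_pair (by decide), Finset.prod_pair (by decide), e2]
  ring

lemma esymm_three_eq : esymm (Fin 3) ℂ 3 = e3 := by
  rw [esymm, show Finset.powersetCard 3 (Finset.univ : Finset (Fin 3)) = {Finset.univ} by decide,
    Finset.sum_singleton, Fin.prod_univ_three, e3]

/-- The Sylvester restriction of `J`. -/
def jRes : MvPolynomial (Fin 3) ℂ := C (10000) * (e2 ^ 2 - 4 * e1 * e3)
/-- The Sylvester restriction of `K`. -/
def kRes : MvPolynomial (Fin 3) ℂ := C (9 * 10 ^ 8) * (e3 ^ 2 * e2)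

lemma exists_aeval_esymm {p : MvPolynomial (Fin 3) ℂ} (hp : p.IsSymmetric) :
    ∃ f : MvPolynomial (Fin 3) ℂ, p = aeval ![e1, e2, e3] f := by
  obtain ⟨f, hf⟩ := esymmAlgHom_fin_surjective (R := ℂ) (n := 3) (m := 3) le_rfl ⟨p, hp⟩
  refine ⟨f, ?_⟩
  have := congrArg Subtype.val hf
  rw [esymmAlgHom_apply] at this
  rw [← show _ = p from this]
  congr 2
  ext1 i
  fin_cases i
  · exact esymm_one_eq
  · exact esymm_two_eq
  · exact esymm_three_eq

/-- `e1` and `e2` lie in `ℂ[jRes, kRes, e3]` once `e3` is inverted. -/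
lemma exists_pow_mul_aeval (f : MvPolynomial (Fin 3) ℂ) :
    ∃ (m : ℕ) (g : MvPolynomial (Fin 3) ℂ),
      e3 ^ (4 * m) * aeval ![e1, e2, e3] f = aeval ![jRes, kRes, e3] g := by
  induction f using MvPolynomial.induction_on with
  | C c => exact ⟨0, C c, by simp⟩
  | add f₁ f₂ h₁ h₂ =>
    obtain ⟨m₁, g₁, h₁⟩ := h₁
    obtain ⟨m₂, g₂, h₂⟩ := h₂
    refine ⟨m₁ + m₂, X 2 ^ (4 * m₂) * g₁ + X 2 ^ (4 * m₁) * g₂, ?_⟩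
    simp only [map_add, map_mul, map_pow, aeval_X, ← h₁, ← h₂, Matrix.cons_val]
    ring
  | mul_X f i h =>
    obtain ⟨m, g, h⟩ := h
    have hi : ∃ q : MvPolynomial (Fin 3) ℂ,
        e3 ^ 8 * (![e1, e2, e3] : Fin 3 → MvPolynomial (Fin 3) ℂ) i
          = aeval ![jRes, kRes, e3] q := by
      have hC : ∀ c : ℂ, c ≠ 0 → (C c⁻¹ * C c : MvPolynomial (Fin 3) ℂ) = 1 := fun c hc => by
        rw [← C_mul, inv_mul_cancel₀ hc, C_1]
      have hk := hC (9 * 10 ^ 8) (by norm_num)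
      have hj := hC 10000 (by norm_num)
      have h4 : (C 4⁻¹ * 4 : MvPolynomial (Fin 3) ℂ) = 1 := by
        have := hC 4 (by norm_num)
        rwa [map_ofNat C 4] at this
      fin_cases i
      · refine ⟨C 4⁻¹ * (X 2 ^ 3 * (C (9 * 10 ^ 8)⁻¹ * X 1) ^ 2
          - X 2 ^ 7 * (C 10000⁻¹ * X 0)), ?_⟩
        have e1' : (C (9 * 10 ^ 8)⁻¹ * kRes : MvPolynomial (Fin 3) ℂ) = e3 ^ 2 * e2 := by
          rw [kRes, ← mul_assoc, hk, one_mul]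
        have e2' : (C 10000⁻¹ * jRes : MvPolynomial (Fin 3) ℂ) = e2 ^ 2 - 4 * e1 * e3 := by
          rw [jRes, ← mul_assoc, hj, one_mul]
        simp only [map_sub, map_mul, map_pow, aeval_X, Matrix.cons_val, aeval_C, algebraMap_eq]
        rw [e1', e2']
        change e3 ^ 8 * e1 = _
        linear_combination (-e3 ^ 8 * e1) * h4
      · refine ⟨X 2 ^ 6 * (C (9 * 10 ^ 8)⁻¹ * X 1), ?_⟩
        have e1' : (C (9 * 10 ^ 8)⁻¹ * kRes : MvPolynomial (Fin 3) ℂ) = e3 ^ 2 * e2 := by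
          rw [kRes, ← mul_assoc, hk, one_mul]
        simp only [map_mul, map_pow, aeval_X, Matrix.cons_val, aeval_C, algebraMap_eq]
        rw [e1']
        change e3 ^ 8 * e2 = _
        ring
      · refine ⟨X 2 ^ 9, ?_⟩
        simp only [map_pow, aeval_X, Matrix.cons_val]
        change e3 ^ 8 * e3 = _
        ring
    obtain ⟨q, hq⟩ := hi
    refine ⟨m + 2, g * q, ?_⟩
    rw [map_mul, map_mul, aeval_X, ← h, ← hq]
    ring

lemma e3_isHomogeneous : e3.IsHomogeneous 3 :=
  ((isHomogeneous_X ℂ 0).mul (isHomogeneous_X ℂ 1)).mul (isHomogeneous_X ℂ 2)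

lemma e2_isHomogeneous : e2.IsHomogeneous 2 :=
  (((isHomogeneous_X ℂ 0).mul (isHomogeneous_X ℂ 1)).add
    ((isHomogeneous_X ℂ 1).mul (isHomogeneous_X ℂ 2))).add
    ((isHomogeneous_X ℂ 2).mul (isHomogeneous_X ℂ 0))

lemma e1_isHomogeneous : e1.IsHomogeneous 1 :=
  ((isHomogeneous_X ℂ 0).add (isHomogeneous_X ℂ 1)).add (isHomogeneous_X ℂ 2)

lemma jRes_isHomogeneous : jRes.IsHomogeneous 4 := by
  have h4 : (4 * e1 * e3 : MvPolynomial (Fin 3) ℂ).IsHomogeneous 4 := by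
    have := ((isHomogeneous_C (Fin 3) (4 : ℂ)).mul e1_isHomogeneous).mul e3_isHomogeneous
    rwa [map_ofNat] at this
  have := (isHomogeneous_C (Fin 3) (10000 : ℂ)).mul ((e2_isHomogeneous.pow 2).sub h4)
  exact this

lemma kRes_isHomogeneous : kRes.IsHomogeneous 8 :=
  (isHomogeneous_C (Fin 3) (9 * 10 ^ 8 : ℂ)).mul ((e3_isHomogeneous.pow 2).mul e2_isHomogeneous)

/-- The Sylvester restriction of `L`. -/
def lRes : MvPolynomial (Fin 3) ℂ := C (-(243 * 10 ^ 12)) * e3 ^ 4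

lemma res_jkl : (fun i => res (jkl i)) = ![jRes, kRes, lRes] := by
  ext1 i
  refine MvPolynomial.funext fun x => ?_
  rw [eval_res]
  fin_cases i
  · simp [jkl, eval_jInv, jInv_sylv, jRes, e1, e2, e3]
  · simp [jkl, eval_kInv, kInv_sylv, kRes, e2, e3]
  · simp [jkl, eval_lInv, lInv_sylv, lRes, e3]

lemma res_aeval_jkl (g : MvPolynomial (Fin 3) ℂ) :
    res (aeval jkl g) = aeval ![jRes, kRes, lRes] g := by
  rw [← res_jkl, ← comp_aeval_apply]

/-- A polynomial in `a, b, e` that involves only fourth powers of `e` is a polynomial in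
`a, b, c e⁴` when `c ≠ 0`. -/
lemma exists_aeval_pow_four (a b e : MvPolynomial (Fin 3) ℂ) {c : ℂ} (hc : c ≠ 0)
    (g : MvPolynomial (Fin 3) ℂ) (hg : ∀ d ∈ g.support, 4 ∣ d 2) :
    ∃ g' : MvPolynomial (Fin 3) ℂ, aeval ![a, b, e] g = aeval ![a, b, C c * e ^ 4] g' := by
  have key : ∀ S : Subalgebra ℂ (MvPolynomial (Fin 3) ℂ), a ∈ S → b ∈ S → C c * e ^ 4 ∈ S →
      aeval ![a, b, e] g ∈ S := by
    intro S ha hb he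
    have hL : e ^ 4 ∈ S := by
      have h := S.smul_mem he c⁻¹
      rwa [smul_eq_C_mul, ← mul_assoc, ← C_mul, inv_mul_cancel₀ hc, C_1, one_mul] at h
    rw [aeval_def, eval₂_eq']
    refine Subalgebra.sum_mem _ fun d hd => ?_
    obtain ⟨k, hk⟩ := hg d hd
    rw [Fin.prod_univ_three, hk, pow_mul]
    simp only [Matrix.cons_val]
    exact mul_mem (Subalgebra.algebraMap_mem _ _)
      (mul_mem (mul_mem (pow_mem ha _) (pow_mem hb _)) (pow_mem hL _))
  have hmem := key (aeval (R := ℂ) ![a, b, C c * e ^ 4]).range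
    ⟨X 0, by simp⟩ ⟨X 1, by simp⟩ ⟨X 2, by simp⟩
  rw [AlgHom.mem_range] at hmem
  obtain ⟨g', h⟩ := hmem
  exact ⟨g', h.symm⟩

/-- The invariants of degree divisible by `4` are the polynomials in `J, K, L`. -/
theorem exists_aeval_jkl {P : MvPolynomial (Fin 6) ℂ} (hP : P ∈ invariantSubmodule) {n : ℕ}
    (hn : 4 ∣ n) (h : P.IsHomogeneous n) : ∃ g : MvPolynomial (Fin 3) ℂ, P = aeval jkl g := by
  obtain ⟨f, hf⟩ := exists_aeval_esymm (res_isSymmetric hP hn h)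
  obtain ⟨m, g, hg⟩ := exists_pow_mul_aeval f
  rw [← hf] at hg
  have hhom : (e3 ^ (4 * m) * res P).IsHomogeneous (3 * (4 * m) + n) :=
    (e3_isHomogeneous.pow _).mul (res_isHomogeneous h)
  -- Degrees show that only the powers of `e3` with exponent divisible by `4` contribute.
  have hg₁ := homogeneousComponent_aeval ![jRes, kRes, e3] ![4, 8, 3] (by
    intro i
    fin_cases i
    · exact jRes_isHomogeneous
    · exact kRes_isHomogeneous
    · exact e3_isHomogeneous) (3 * (4 * m) + n) g
  rw [← hg, homogeneousComponent_of_mem hhom, if_pos rfl] at hg₁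
  obtain ⟨g', hg'⟩ := exists_aeval_pow_four jRes kRes e3 (c := -(243 * 10 ^ 12)) (by norm_num)
    (weightedHomogeneousComponent ![4, 8, 3] (3 * (4 * m) + n) g) (by
      intro d hd
      have := weightedHomogeneousComponent_isWeightedHomogeneous (3 * (4 * m) + n) g
        (w := ![4, 8, 3]) (mem_support_iff.mp hd)
      rw [Finsupp.weight_apply, Finsupp.sum_fintype _ _ (by simp), Fin.sum_univ_three] at this
      simp at this
      omega)
  rw [hg', ← lRes] at hg₁
  refine ⟨_, (mem_of_lInv_pow_mul m P (C ((-(243 * 10 ^ 12)) ^ m) * g') ?_).choose_spec⟩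
  rw [← sub_eq_zero]
  refine eq_zero_of_sylv ?_ ?_
  · refine Submodule.sub_mem _ ?_ (aeval_jkl_mem _)
    have hl := aeval_jkl_mem (X 2)
    rw [mem_invariantSubmodule_iff] at hP hl ⊢
    rw [aeval_X] at hl
    intro p q r s hdet a
    rw [map_mul, map_mul, map_pow, map_pow, hP p q r s hdet, ← show jkl 2 = lInv X from rfl,
      hl p q r s hdet]
  · intro u v w
    have hl : res (lInv X) = lRes := congrFun res_jkl 2
    have : res (lInv X ^ m * P - aeval jkl (C ((-(243 * 10 ^ 12)) ^ m) * g')) = 0 := by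
      rw [map_sub, res_aeval_jkl, map_mul, map_mul, map_pow, hl, ← hg₁, aeval_C,
        algebraMap_eq, lRes]
      simp only [C_pow]
      ring
    have h2 := eval_res ![u, v, w] (lInv X ^ m * P - aeval jkl (C ((-(243 * 10 ^ 12)) ^ m) * g'))
    rw [this] at h2
    simpa using h2.symm

/-! ### Counting monomials -/

lemma jkl_isHomogeneous (i : Fin 3) : (jkl i).IsHomogeneous ((![4, 8, 12] : Fin 3 → ℕ) i) := by
  have n (k : ℕ) [k.AtLeastTwo] :
      (ofNat(k) : MvPolynomial (Fin 6) ℂ).IsHomogeneous 0 := by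
    have := isHomogeneous_C (Fin 6) (ofNat(k) : ℂ)
    rwa [map_ofNat] at this
  have x (i : Fin 6) : (X i : MvPolynomial (Fin 6) ℂ).IsHomogeneous 1 := isHomogeneous_X ℂ i
  have hcA : (cA X : MvPolynomial (Fin 6) ℂ).IsHomogeneous 2 :=
    ((((n 20).mul (x 0)).mul (x 4)).sub (((n 8).mul (x 1)).mul (x 3))).add
      ((n 3).mul ((x 2).pow 2))
  have hcB : (cB X : MvPolynomial (Fin 6) ℂ).IsHomogeneous 2 :=
    ((((n 100).mul (x 0)).mul (x 5)).sub (((n 12).mul (x 1)).mul (x 4))).add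
      (((n 2).mul (x 2)).mul (x 3))
  have hcC : (cC X : MvPolynomial (Fin 6) ℂ).IsHomogeneous 2 :=
    ((((n 20).mul (x 1)).mul (x 5)).sub (((n 8).mul (x 2)).mul (x 4))).add
      ((n 3).mul ((x 3).pow 2))
  have hdA : (dA X : MvPolynomial (Fin 6) ℂ).IsHomogeneous 3 :=
    ((((n 10).mul (x 0)).mul hcC).sub (((n 2).mul (x 1)).mul hcB)).add ((x 2).mul hcA)
  have hdB : (dB X : MvPolynomial (Fin 6) ℂ).IsHomogeneous 3 :=
    ((((n 6).mul (x 1)).mul hcC).sub (((n 3).mul (x 2)).mul hcB)).add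
      (((n 3).mul (x 3)).mul hcA)
  have hdC : (dC X : MvPolynomial (Fin 6) ℂ).IsHomogeneous 3 :=
    ((((n 3).mul (x 2)).mul hcC).sub (((n 3).mul (x 3)).mul hcB)).add
      (((n 6).mul (x 4)).mul hcA)
  have hdD : (dD X : MvPolynomial (Fin 6) ℂ).IsHomogeneous 3 :=
    (((x 3).mul hcC).sub (((n 2).mul (x 4)).mul hcB)).add (((n 10).mul (x 5)).mul hcA)
  have heA : (eA X : MvPolynomial (Fin 6) ℂ).IsHomogeneous 6 :=
    (hdB.pow 2).sub (((n 3).mul hdA).mul hdC)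
  have heB : (eB X : MvPolynomial (Fin 6) ℂ).IsHomogeneous 6 :=
    (hdB.mul hdC).sub (((n 9).mul hdA).mul hdD)
  have heC : (eC X : MvPolynomial (Fin 6) ℂ).IsHomogeneous 6 :=
    (hdC.pow 2).sub (((n 3).mul hdB).mul hdD)
  fin_cases i
  · exact (hcB.pow 2).sub (((n 4).mul hcA).mul hcC)
  · exact ((hcB.mul heB).sub (((n 2).mul hcA).mul heC)).sub (((n 2).mul hcC).mul heA)
  · exact (heB.pow 2).sub (((n 4).mul heA).mul heC)

/-- The degree `n` invariants correspond to the polynomials in three variables of weights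
`4, 8, 12` that are isobaric of weight `n`. -/
lemma homogeneous_inf_invariant_eq (n : ℕ) (hn : 4 ∣ n) :
    homogeneousSubmodule (Fin 6) ℂ n ⊓ invariantSubmodule =
      (weightedHomogeneousSubmodule ℂ (![4, 8, 12] : Fin 3 → ℕ) n).map
        (aeval (R := ℂ) jkl).toLinearMap := by
  ext P
  rw [Submodule.mem_inf, mem_homogeneousSubmodule, Submodule.mem_map]
  constructor
  · rintro ⟨hh, hinv⟩
    obtain ⟨g, rfl⟩ := exists_aeval_jkl hinv hn hh
    refine ⟨weightedHomogeneousComponent ![4, 8, 12] n g,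
      weightedHomogeneousComponent_mem _ _ _, ?_⟩
    rw [AlgHom.toLinearMap_apply, ← homogeneousComponent_aeval jkl _ jkl_isHomogeneous,
      homogeneousComponent_of_mem hh, if_pos rfl]
  · rintro ⟨g, hg, rfl⟩
    refine ⟨?_, aeval_jkl_mem g⟩
    have h := homogeneousComponent_aeval jkl _ jkl_isHomogeneous n g
    rw [weightedHomogeneousComponent_of_mem hg, if_pos rfl] at h
    rw [AlgHom.toLinearMap_apply, ← h]
    exact homogeneousComponent_isHomogeneous _ _

/-- The exponents `(i, j, k)` with `4i + 8j + 12k = 24l`: `k = 2l - m` leaves `i + 2j = 3m`,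
which has `⌊3m/2⌋ + 1` solutions. -/
lemma card_weight (l : ℕ) :
    Nat.card {d : Fin 3 →₀ ℕ | Finsupp.weight (![4, 8, 12] : Fin 3 → ℕ) d = 24 * l}
      = ∑ m ∈ Finset.range (2 * l + 1), (3 * m / 2 + 1) := by
  have hw (d : Fin 3 →₀ ℕ) : Finsupp.weight (![4, 8, 12] : Fin 3 → ℕ) d
      = 4 * d 0 + 8 * d 1 + 12 * d 2 := by
    rw [Finsupp.weight_apply, Finsupp.sum_fintype _ _ (by simp), Fin.sum_univ_three]
    simp [mul_comm]
  let S : Finset (Σ _ : ℕ, ℕ) := (Finset.range (2 * l + 1)).sigma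
    fun m => Finset.range (3 * m / 2 + 1)
  have hS : S.card = ∑ m ∈ Finset.range (2 * l + 1), (3 * m / 2 + 1) := by
    simp [S, Finset.card_sigma]
  let φ : (Σ _ : ℕ, ℕ) → (Fin 3 →₀ ℕ) := fun x =>
    Finsupp.equivFunOnFinite.symm ![3 * x.1 - 2 * x.2, x.2, 2 * l - x.1]
  have himage : {d : Fin 3 →₀ ℕ | Finsupp.weight (![4, 8, 12] : Fin 3 → ℕ) d = 24 * l}
      = φ '' (S : Set (Σ _ : ℕ, ℕ)) := by
    ext d
    simp only [Set.mem_ofPred_eq, hw, Set.mem_image, Finset.mem_coe, S, Finset.mem_sigma,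
      Finset.mem_range, φ]
    constructor
    · intro hd
      refine ⟨⟨2 * l - d 2, d 1⟩, ⟨by dsimp only; omega, by dsimp only; omega⟩, ?_⟩
      ext i
      fin_cases i <;> simp <;> omega
    · rintro ⟨⟨m, j⟩, ⟨h1, h2⟩, rfl⟩
      simp at h1 h2 ⊢
      omega
  have hinj : Set.InjOn φ (S : Set (Σ _ : ℕ, ℕ)) := by
    rintro ⟨m, j⟩ h ⟨m', j'⟩ h' heq
    simp only [Finset.mem_coe, S, Finset.mem_sigma, Finset.mem_range] at h h'
    have h1 := DFunLike.congr_fun heq 1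
    have h2 := DFunLike.congr_fun heq 2
    simp [φ] at h1 h2
    obtain rfl : m = m' := by omega
    rw [h1]
  rw [← hS, Nat.card_coe_set_eq, himage, hinj.ncard_image, Set.ncard_coe_finset]

lemma sum_count (l : ℕ) :
    ∑ m ∈ Finset.range (2 * l + 1), (3 * m / 2 + 1) = 3 * l ^ 2 + 3 * l + 1 := by
  induction l with
  | zero => simp
  | succ l ih =>
    rw [show 2 * (l + 1) + 1 = 2 * l + 1 + 1 + 1 by ring, Finset.sum_range_succ,
      Finset.sum_range_succ, ih]
    have h1 : 3 * (2 * l + 1) / 2 = 3 * l + 1 := by omega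
    have h2 : 3 * (2 * l + 1 + 1) / 2 = 3 * l + 3 := by omega
    rw [h1, h2]
    ring

/-- The space of `SL₂(ℂ)`-invariant homogeneous polynomials of degree `24l` in
the coefficients of the binary quintic has dimension `3l² + 3l + 1`. -/
theorem dim_invariants_degree_24l (l : ℕ) (hl : 1 ≤ l) :
    Module.finrank ℂ
      ↥(MvPolynomial.homogeneousSubmodule (Fin 6) ℂ (24 * l) ⊓ invariantSubmodule)
      = 3 * l ^ 2 + 3 * l + 1 := by
  rw [homogeneous_inf_invariant_eq _ ⟨6 * l, by ring⟩,
    ← (Submodule.equivMapOfInjective (aeval (R := ℂ) jkl).toLinearMap aeval_jkl_injective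
      _).finrank_eq,
    weightedHomogeneousSubmodule_eq_finsupp_supported]
  rw [← sum_count, ← card_weight]
  exact Module.finrank_eq_nat_card_basis (basisRestrictSupport ℂ
    {d : Fin 3 →₀ ℕ | Finsupp.weight (![4, 8, 12] : Fin 3 → ℕ) d = 24 * l})

end
end

section
/- For every integer k ≥ 1 and all nonnegative integers α₁, α₂, α₃ satisfying 3α₁ + 2α₂ + α₃ = 12k, there exist nonnegative integers a_m, b_m, c_m for 1 ≤ m ≤ k such that 3a_m + 2b_m + c_m = 12 for each m, and Σ_{m=1}^k a_m = α₁, Σ_{m=1}^k b_m = α₂, Σ_{m=1}^k c_m = α₃. -/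
/-!
The factors are split off one at a time: it suffices that every monomial of weight `12 (k + 1)`,
where `L`, `K`, `J` have weights `3`, `2`, `1`, is divisible by some monomial of weight `12`
(`exists_weight_twelve_factor`), for then induction on `k` applies to the quotient. The divisor can
be `L⁴`, `K⁶` or `J¹²` as soon as one of the exponents is large; otherwise the weight is at most
`9 + 10 + 11 = 30`, and the remaining small monomials are handled greedily.
-/

noncomputable section

open MvPolynomial

/-- A monomial `L^x K^y J^z` of positive weight divisible by `12` has a divisor of weight `12`. -/
theorem exists_weight_twelve_factor (k x y z : ℕ) (h : 3 * x + 2 * y + z = 12 * (k + 1)) :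
    ∃ a b c : ℕ, a ≤ x ∧ b ≤ y ∧ c ≤ z ∧ 3 * a + 2 * b + c = 12 := by
  by_cases hx : 4 ≤ x
  · exact ⟨4, 0, 0, by omega⟩
  by_cases hy : 6 ≤ y
  · exact ⟨0, 6, 0, by omega⟩
  by_cases hz : 12 ≤ z
  · exact ⟨0, 0, 12, by omega⟩
  -- Take all of `L^x`, as much of `K^y` as fits, and fill up with `J`. If `K` is not exhausted, at
  -- most one `J` is needed; then `z = 0` would give a weight of at most `9 + 10 < 24`, hence
  -- exactly `12`, and `K` would be exhausted after all.
  exact ⟨x, min y ((12 - 3 * x) / 2), 12 - 3 * x - 2 * min y ((12 - 3 * x) / 2), by omega⟩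

/-- Every monomial `L^α₁ K^α₂ J^α₃` of degree `48k` in generators of degrees
`12, 8, 4` factors as a product of `k` monomials each of degree `48`. -/
theorem monomial_factorization (k : ℕ) (hk : 1 ≤ k) (α₁ α₂ α₃ : ℕ)
    (h : 3 * α₁ + 2 * α₂ + α₃ = 12 * k) :
    ∃ a b c : Fin k → ℕ,
      (∀ m, 3 * a m + 2 * b m + c m = 12) ∧
      (∑ m, a m = α₁) ∧ (∑ m, b m = α₂) ∧ (∑ m, c m = α₃) := by
  clear hk
  induction k generalizing α₁ α₂ α₃ with
  | zero => exact ⟨0, 0, 0, fun m => m.elim0, by simp; omega⟩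
  | succ k ih =>
    obtain ⟨a₀, b₀, c₀, ha, hb, hc, h₀⟩ := exists_weight_twelve_factor k α₁ α₂ α₃ h
    obtain ⟨a, b, c, hw, hsa, hsb, hsc⟩ := ih (α₁ - a₀) (α₂ - b₀) (α₃ - c₀) (by omega)
    refine ⟨Fin.cons a₀ a, Fin.cons b₀ b, Fin.cons c₀ c, ?_, ?_, ?_, ?_⟩
    · intro m
      refine Fin.cases ?_ (fun i => ?_) m
      · simpa using h₀
      · simpa using hw i
    all_goals
      simp only [Fin.sum_univ_succ, Fin.cons_zero, Fin.cons_succ]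
      omega

end
end

section
/- Let F₁ and F₂ be binary quintics over ℂ, each with five pairwise non-proportional homogeneous roots, written F_m(x) = (xλ₁^{(m)})⋯(xλ₅^{(m)}) for m = 1, 2. For each l, let j_l(F_m) := S(Q_l^{(m)})³ / (S(Q_l^{(m)})³ − 27·T(Q_l^{(m)})²), where Q_l^{(m)} is the quartic obtained from F_m by omitting the l-th factor (this is well defined since four distinct points have nonzero quartic discriminant S³ − 27T² up to a nonzero constant). If the unordered multisets {j₁(F₁),…,j₅(F₁)} and {j₁(F₂),…,j₅(F₂)} are equal, then F₁ and F₂ are projectively equivalent: there exist g ∈ GL₂(ℂ) and c ∈ ℂ \ {0} such that F₂ = c·(gF₁). -/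
/-!
Move the five roots to `∞, 0, 1, a, b`. The `j`-invariants of the five four-point subsets become
`4/27` times `jn a` and the four values `jA`, `jB`, `jC`, `jD` (`exists_std`). After relabelling
the roots of one quintic, the five `j`-invariants agree one by one; only `jn a` and the first two
elementary symmetric functions `E1`, `E2` of the other four are used.

Equality of `jn a` and the anharmonic group (`jn_inj`, `Move`) reduce to configurations with the
same `a`. The Klein four-group of Möbius maps preserving `{∞, 0, 1, a}` acts on `b`, its orbits are
separated by `t = tt a b` (`tt_inj`), and `E1`, `E2` are polynomials in `t` (`E1_eq`, `E2_eq`), of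
degrees 2 and 4 for general `a`. Let `t ≠ u` have the same `E1` and `E2` (`E_cases`).

* If `a² - a + 1 = 0` (equianharmonic), `E1` is constant and `E2` is a cubic in `t` of the form
  `k (t - t₀)³ + const`; the Möbius map of order 3 fixing `a` rotates `t` about `t₀`.
* Otherwise `E1` determines `t + u`. If `a ∈ {-1, 2, 1/2}` (harmonic), there is an extra involution
  fixing `a`, and it exchanges `t` and `u`.
* In the remaining case `E2` determines `t u` too, and the pair is
  `{tt a (1/(1 - a)), tt a (1 - 1/a)}`. These two configurations are equivalent by exchanging the
  roles of the fourth and fifth points.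

So the configurations are equivalent in every case (`W_of_E`, `W_of_all`).
-/

noncomputable section

open MvPolynomial

/-! ### Cross ratios and the symmetric functions of the `j`-invariants -/

/-- `27/4` times the `j`-invariant of four points, as a function of their cross ratio `x`. -/
def jn (x : ℂ) : ℂ := (x ^ 2 - x + 1) ^ 3 / (x ^ 2 * (1 - x) ^ 2)

/-- The sum of the orbit of `b` under the Klein four-group of Möbius transformations preserving
`{∞, 0, 1, a}`; it classifies five-point configurations `∞, 0, 1, a, b` with fixed `a`. -/
def tt (a b : ℂ) : ℂ := b + a / b + (b - a) / (b - 1) + a * (b - 1) / (b - a)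

/-- The five points `∞, 0, 1, a, b` of the projective line are distinct. -/
structure Good (a b : ℂ) : Prop where
  a0 : a ≠ 0
  a1 : a - 1 ≠ 0
  b0 : b ≠ 0
  b1 : b - 1 ≠ 0
  ba : b - a ≠ 0

/-- The normalised `j`-invariant of `∞, 0, 1, b` (omitting `a` from `∞, 0, 1, a, b`). -/
def jA (_a b : ℂ) : ℂ := jn b
/-- The normalised `j`-invariant of `∞, 0, a, b` (omitting `1`). -/
def jB (a b : ℂ) : ℂ := jn (b / a)
/-- The normalised `j`-invariant of `∞, 1, a, b` (omitting `0`). -/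
def jC (a b : ℂ) : ℂ := jn ((b - 1) / (a - 1))
/-- The normalised `j`-invariant of `0, 1, a, b` (omitting `∞`). -/
def jD (a b : ℂ) : ℂ := jn (b * (a - 1) / (a * (b - 1)))

theorem jA_eq (a b : ℂ) :
    jA a b = (b ^ 2 - b + 1) ^ 3 / (b ^ 2 * (b - 1) ^ 2) := by
  rw [jA, jn, ← neg_sub 1 b, neg_sq]

theorem jB_eq {a b : ℂ} (h : Good a b) :
    jB a b = (b ^ 2 - a * b + a ^ 2) ^ 3 / (a ^ 2 * b ^ 2 * (b - a) ^ 2) := by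
  obtain ⟨h1, h2, h3, h4, h5⟩ := h
  have e : 1 - b / a = - (b - a) / a := by field_simp; ring
  rw [jB, jn, e]; field_simp

theorem jC_eq {a b : ℂ} (h : Good a b) :
    jC a b = ((b - 1) ^ 2 - (a - 1) * (b - 1) + (a - 1) ^ 2) ^ 3
      / ((a - 1) ^ 2 * (b - 1) ^ 2 * (b - a) ^ 2) := by
  obtain ⟨h1, h2, h3, h4, h5⟩ := h
  have e : 1 - (b - 1) / (a - 1) = - (b - a) / (a - 1) := by field_simp; ring
  have e' : ((b - 1) / (a - 1)) ^ 2 - (b - 1) / (a - 1) + 1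
    = ((b - 1) ^ 2 - (a - 1) * (b - 1) + (a - 1) ^ 2) / (a - 1) ^ 2 := by field_simp
  rw [jC, jn, e, e']; field_simp

theorem jD_eq {a b : ℂ} (h : Good a b) :
    jD a b = (b ^ 2 * (a - 1) ^ 2 - a * (a - 1) * b * (b - 1) + a ^ 2 * (b - 1) ^ 2) ^ 3
      / (a ^ 2 * (a - 1) ^ 2 * b ^ 2 * (b - 1) ^ 2 * (b - a) ^ 2) := by
  obtain ⟨h1, h2, h3, h4, h5⟩ := h
  have e : 1 - b * (a - 1) / (a * (b - 1)) = (b - a) / (a * (b - 1)) := by field_simp; ring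
  have e₂ : (b * (a - 1) / (a * (b - 1))) ^ 2 - b * (a - 1) / (a * (b - 1)) + 1
    = (b ^ 2 * (a - 1) ^ 2 - a * (a - 1) * b * (b - 1) + a ^ 2 * (b - 1) ^ 2)
      / (a * (b - 1)) ^ 2 := by field_simp
  rw [jD, jn, e, e₂]; field_simp

/-- The first elementary symmetric function of the four `j`-invariants involving `b`. -/
def E1 (a b : ℂ) : ℂ := jA a b + jB a b + jC a b + jD a b
/-- The second elementary symmetric function of the four `j`-invariants involving `b`. -/
def E2 (a b : ℂ) : ℂ :=
  jA a b * jB a b + jA a b * jC a b + jA a b * jD a b + jB a b * jC a b + jB a b * jD a b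
    + jC a b * jD a b

theorem tt_eq {a b : ℂ} (h : Good a b) :
    tt a b = (b ^ 2 * (b - 1) * (b - a) + a * (b - 1) * (b - a) + b * (b - a) ^ 2
      + a * b * (b - 1) ^ 2) / (b * (b - 1) * (b - a)) := by
  obtain ⟨h1, h2, h3, h4, h5⟩ := h
  rw [tt]; field_simp

/-- Being invariant under the Klein four-group, `E1` is a polynomial in `tt a b`, of degree 2
unless `a² - a + 1 = 0`. -/
theorem E1_eq {a b : ℂ} (h : Good a b) :
    a ^ 2 * (a - 1) ^ 2 * E1 a b = (a ^ 2 - a + 1) ^ 2 * tt a b ^ 2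
      - (a ^ 2 - a + 1) * (2 + a + a ^ 2 + 2 * a ^ 3) * tt a b
      + (4 * a + 4 * a ^ 2 - 8 * a ^ 3 + 4 * a ^ 4 + 4 * a ^ 5) := by
  rw [E1, jA_eq, jB_eq h, jC_eq h, jD_eq h, tt_eq h]
  obtain ⟨h1, h2, h3, h4, h5⟩ := h
  field_simp
  ring

/-- Being invariant under the Klein four-group, `E2` is a polynomial in `tt a b`, of degree 4
unless `a² - a + 1 = 0`. -/
theorem E2_eq {a b : ℂ} (h : Good a b) :
    a ^ 4 * (a - 1) ^ 4 * E2 a b =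
      2 * a ^ 2 * (a - 1) ^ 2 * (a ^ 2 - a + 1) * tt a b ^ 4
      - a ^ 2 * (a - 1) ^ 2 * (10 + a + a ^ 2 + 10 * a ^ 3) * tt a b ^ 3
      + (1 - 5 * a + 31 * a ^ 2 - 34 * a ^ 3 + 5 * a ^ 4 + 5 * a ^ 5 + 5 * a ^ 6 - 34 * a ^ 7
        + 31 * a ^ 8 - 5 * a ^ 9 + a ^ 10) * tt a b ^ 2
      + (- 4 * a - 34 * a ^ 3 + 52 * a ^ 4 - 18 * a ^ 5 - 18 * a ^ 6 + 52 * a ^ 7 - 34 * a ^ 8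
        - 4 * a ^ 10) * tt a b
      + (6 * a ^ 2 + 10 * a ^ 3 - 10 * a ^ 4 - 12 * a ^ 5 + 28 * a ^ 6 - 12 * a ^ 7 - 10 * a ^ 8
        + 10 * a ^ 9 + 6 * a ^ 10) := by
  rw [E2, jA_eq, jB_eq h, jC_eq h, jD_eq h, tt_eq h]
  obtain ⟨h1, h2, h3, h4, h5⟩ := h
  field_simp
  ring

/-- `tt a` separates the orbits of the Klein four-group preserving `{∞, 0, 1, a}`. -/
theorem tt_inj {a b b' : ℂ} (h : Good a b) (h' : Good a b') (ht : tt a b = tt a b') :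
    b' = b ∨ b' = a / b ∨ b' = (b - a) / (b - 1) ∨ b' = a * (b - 1) / (b - a) := by
  rw [tt_eq h, tt_eq h'] at ht
  obtain ⟨h1, h2, h3, h4, h5⟩ := h
  obtain ⟨-, -, h3', h4', h5'⟩ := h'
  rw [div_eq_div_iff (by simp [*]) (by simp [*])] at ht
  have key : (b' - b) * ((b * b' - a) * ((b' * (b - 1) - (b - a)) *
      (b' * (b - a) - a * (b - 1)))) = 0 := by
    linear_combination (-1 : ℂ) * ht
  rcases mul_eq_zero.1 key with k | k
  · left; linear_combination k
  right
  rcases mul_eq_zero.1 k with k | k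
  · left; rw [eq_div_iff h3]; linear_combination k
  right
  rcases mul_eq_zero.1 k with k | k
  · left; rw [eq_div_iff h4]; linear_combination k
  · right; rw [eq_div_iff h5]; linear_combination k

/-- `jn` separates the orbits of the anharmonic group generated by `x ↦ 1 - x` and `x ↦ 1 / x`. -/
theorem jn_inj {x y : ℂ} (hx0 : x ≠ 0) (hx1 : x - 1 ≠ 0) (hy0 : y ≠ 0) (hy1 : y - 1 ≠ 0)
    (h : jn x = jn y) :
    y = x ∨ y = 1 - x ∨ y = 1 / x ∨ y = 1 / (1 - x) ∨ y = 1 - 1 / x ∨ y = 1 - 1 / (1 - x) := by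
  have hx1' : 1 - x ≠ 0 := by rw [← neg_sub]; exact neg_ne_zero.2 hx1
  have hy1' : 1 - y ≠ 0 := by rw [← neg_sub]; exact neg_ne_zero.2 hy1
  rw [jn, jn, div_eq_div_iff (by simp [*]) (by simp [*])] at h
  have key : (y - x) * ((y - (1 - x)) * ((y * x - 1) * ((y * (1 - x) - 1) *
      ((y * x - (x - 1)) * (y * (1 - x) + x))))) = 0 := by
    linear_combination (-1 : ℂ) * h
  rcases mul_eq_zero.1 key with k | k
  · left; linear_combination k
  right
  rcases mul_eq_zero.1 k with k | k
  · left; linear_combination k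
  right
  rcases mul_eq_zero.1 k with k | k
  · left; field_simp; linear_combination k
  right
  rcases mul_eq_zero.1 k with k | k
  · left; field_simp; linear_combination k
  right
  rcases mul_eq_zero.1 k with k | k
  · left; field_simp; linear_combination k
  · right; field_simp; linear_combination k

/-- The pairs of values of `tt` compatible with equal `E1` and `E2`. Besides equality there are
the equianharmonic case `a² - a + 1 = 0`, where the two values are related by a rotation of order
3 about `4(1 + a)/3`; the harmonic case `(a + 1)(a - 2)(2a - 1) = 0`, where they are related by a
reflection; and one exceptional pair for general `a`, namely `tt a (1/(1 - a))` and
`tt a (1 - 1/a)`. -/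
theorem E_cases {a b b' : ℂ} (h : Good a b) (h' : Good a b') (e1 : E1 a b = E1 a b')
    (e2 : E2 a b = E2 a b') :
    tt a b = tt a b' ∨
    (a ^ 2 - a + 1 = 0 ∧ (3 * tt a b - 4 * (1 + a) = - a * (3 * tt a b' - 4 * (1 + a)) ∨
      3 * tt a b - 4 * (1 + a) = (a - 1) * (3 * tt a b' - 4 * (1 + a)))) ∨
    (a ^ 2 - a + 1 ≠ 0 ∧ (a ^ 2 - a + 1) * (tt a b + tt a b') = 2 + a + a ^ 2 + 2 * a ^ 3 ∧
      ((a + 1) * (a - 2) * (2 * a - 1) = 0 ∨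
        (a ^ 2 - a + 1) * (a * (1 - a)) * tt a b =
          1 - 2 * a + 5 * a ^ 2 - 6 * a ^ 3 + 6 * a ^ 4 - 4 * a ^ 5 + a ^ 6 ∨
        (a ^ 2 - a + 1) * (a * (1 - a)) * tt a b =
          - 1 + 4 * a - 6 * a ^ 2 + 6 * a ^ 3 - 5 * a ^ 4 + 2 * a ^ 5 - a ^ 6)) := by
  have f1 := E1_eq h
  have f2 := E2_eq h
  rw [e1, E1_eq h'] at f1
  rw [e2, E2_eq h'] at f2
  generalize tt a b = u at *
  generalize tt a b' = w at *
  by_cases huw : u = w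
  · exact Or.inl huw
  right
  have huw' : u - w ≠ 0 := sub_ne_zero.2 huw
  by_cases hS : a ^ 2 - a + 1 = 0
  · left
    refine ⟨hS, ?_⟩
    -- modulo `a² - a + 1` the quartic term of `E2` vanishes and the cubic factors
    have key : (u - w) * ((1 - 2 * a) * (((3 * u - 4 * (1 + a)) + a * (3 * w - 4 * (1 + a))) *
        ((3 * u - 4 * (1 + a)) - (a - 1) * (3 * w - 4 * (1 + a))))) = 0 := by
      grind
    have h2a : 1 - 2 * a ≠ 0 := by
      intro h0
      have : (3 : ℂ) = 0 := by linear_combination 4 * hS - (1 - 2 * a) * h0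
      norm_num at this
    rcases mul_eq_zero.1 ((mul_eq_zero.1 ((mul_eq_zero.1 key).resolve_left huw')).resolve_left h2a)
      with k | k
    · left; linear_combination k
    · right; linear_combination k
  · right
    have hv : (a ^ 2 - a + 1) * (u + w) - (2 + a + a ^ 2 + 2 * a ^ 3) = 0 := by
      have : (u - w) * ((a ^ 2 - a + 1) *
          ((a ^ 2 - a + 1) * (u + w) - (2 + a + a ^ 2 + 2 * a ^ 3))) = 0 := by
        linear_combination (-1 : ℂ) * f1
      exact (mul_eq_zero.1 ((mul_eq_zero.1 this).resolve_left huw')).resolve_left hS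
    refine ⟨hS, by linear_combination hv, ?_⟩
    by_cases hT : (a + 1) * (a - 2) * (2 * a - 1) = 0
    · exact Or.inl hT
    right
    -- `k4, …, k1` are the coefficients of the quartic in `tt` expressing `E2`; naming them keeps
    -- the elimination of `u + w` manageable for `linear_combination`
    obtain ⟨S, hS'⟩ : ∃ S, S = a ^ 2 - a + 1 := ⟨_, rfl⟩
    obtain ⟨B, hB⟩ : ∃ B, B = 2 + a + a ^ 2 + 2 * a ^ 3 := ⟨_, rfl⟩
    obtain ⟨k4, hk4⟩ : ∃ k, k = 2 * a ^ 2 * (a - 1) ^ 2 * (a ^ 2 - a + 1) := ⟨_, rfl⟩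
    obtain ⟨k3, hk3⟩ : ∃ k, k = - (a ^ 2 * (a - 1) ^ 2 * (10 + a + a ^ 2 + 10 * a ^ 3)) := ⟨_, rfl⟩
    obtain ⟨k2, hk2⟩ : ∃ k, k = 1 - 5 * a + 31 * a ^ 2 - 34 * a ^ 3 + 5 * a ^ 4 + 5 * a ^ 5
      + 5 * a ^ 6 - 34 * a ^ 7 + 31 * a ^ 8 - 5 * a ^ 9 + a ^ 10 := ⟨_, rfl⟩
    obtain ⟨k1, hk1⟩ : ∃ k, k = - 4 * a - 34 * a ^ 3 + 52 * a ^ 4 - 18 * a ^ 5 - 18 * a ^ 6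
      + 52 * a ^ 7 - 34 * a ^ 8 - 4 * a ^ 10 := ⟨_, rfl⟩
    rw [← hS', ← hB] at hv
    have hG : k4 * ((u + w) ^ 3 - 2 * (u + w) * (u * w)) + k3 * ((u + w) ^ 2 - u * w)
        + k2 * (u + w) + k1 = 0 := by
      refine (mul_eq_zero.1 (?_ : (u - w) * _ = 0)).resolve_left huw'
      rw [hk4, hk3, hk2, hk1]
      linear_combination (-1 : ℂ) * f2
    have hG' : k4 * (B ^ 3 - 2 * B * S ^ 2 * (u * w)) + k3 * (B ^ 2 * S - S ^ 3 * (u * w))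
        + k2 * B * S ^ 2 + k1 * S ^ 3 = 0 := by
      linear_combination S ^ 3 * hG - (k4 * (S ^ 2 * (u + w) ^ 2 + S * (u + w) * B + B ^ 2
        - 2 * S ^ 2 * (u * w)) + k3 * S * (S * (u + w) + B) + k2 * S ^ 2) * hv
    -- eliminating `u + w` from `E2` leaves a linear equation for `u * w`, with leading
    -- coefficient a multiple of `(a + 1)(a - 2)(2a - 1)`
    have hw : S ^ 2 * (a * (1 - a)) ^ 2 * (u * w) =
        (1 - 2 * a + 5 * a ^ 2 - 6 * a ^ 3 + 6 * a ^ 4 - 4 * a ^ 5 + a ^ 6) *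
        (- 1 + 4 * a - 6 * a ^ 2 + 6 * a ^ 3 - 5 * a ^ 4 + 2 * a ^ 5 - a ^ 6) := by
      rw [← sub_eq_zero]
      refine (mul_eq_zero.1 (?_ : (S * ((a + 1) * (a - 2) * (2 * a - 1))) * _ = 0)).resolve_left
        (mul_ne_zero (hS' ▸ hS) hT)
      rw [hk4, hk3, hk2, hk1, hS', hB] at hG'
      rw [hS']
      linear_combination hG'
    rw [← hS']
    have hfac : (S * (a * (1 - a)) * u -
          (1 - 2 * a + 5 * a ^ 2 - 6 * a ^ 3 + 6 * a ^ 4 - 4 * a ^ 5 + a ^ 6)) *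
        (S * (a * (1 - a)) * u -
          (- 1 + 4 * a - 6 * a ^ 2 + 6 * a ^ 3 - 5 * a ^ 4 + 2 * a ^ 5 - a ^ 6)) = 0 := by
      linear_combination S * (a * (1 - a)) ^ 2 * u * hv - hw + S * (a * (1 - a)) ^ 2 * u * hB
    rcases mul_eq_zero.1 hfac with k | k
    · left; linear_combination k
    · right; linear_combination k

/-! ### Projective equivalence -/

/-- The linear substitution `x₁ ↦ p x₁ + q x₂`, `x₂ ↦ r x₁ + s x₂` on binary forms. -/
def subst (p q r s : ℂ) : P2 →ₐ[ℂ] P2 :=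
  aeval ![C p * X 0 + C q * X 1, C r * X 0 + C s * X 1]

theorem subst_lin (p q r s : ℂ) (v : Fin 2 → ℂ) :
    subst p q r s (lin v) = lin ![s * v 0 - q * v 1, p * v 1 - r * v 0] := by
  simp only [subst, lin, map_sub, map_mul, aeval_X, algHom_C, Matrix.cons_val_zero,
    Matrix.cons_val_one, algebraMap_eq]
  ring

theorem subst_comp (p q r s p' q' r' s' : ℂ) (F : P2) :
    subst p' q' r' s' (subst p q r s F) =
      subst (p * p' + q * r') (p * q' + q * s') (r * p' + s * r') (r * q' + s * s') F := by
  rw [← AlgHom.comp_apply]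
  congr 1
  refine MvPolynomial.algHom_ext (fun i => ?_)
  fin_cases i <;>
  · simp only [subst, AlgHom.comp_apply, aeval_X, map_add, map_mul, algHom_C, algebraMap_eq,
      Fin.zero_eta, Fin.mk_one, Matrix.cons_val_zero, Matrix.cons_val_one]
    ring

theorem subst_one (F : P2) : subst 1 0 0 1 F = F := by
  have : subst 1 0 0 1 = AlgHom.id ℂ P2 := by
    refine MvPolynomial.algHom_ext (fun i => ?_)
    fin_cases i <;> simp [subst]
  rw [this]; rfl

/-- Projective equivalence of binary forms, with the matrix entries spelled out. -/
def PE (F G : P2) : Prop :=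
  ∃ p q r s k : ℂ, p * s - q * r ≠ 0 ∧ k ≠ 0 ∧ G = C k * subst p q r s F

theorem PE.refl (F : P2) : PE F F := ⟨1, 0, 0, 1, 1, by simp, by simp, by simp [subst_one]⟩

theorem PE.trans {F G H : P2} (h : PE F G) (h' : PE G H) : PE F H := by
  obtain ⟨p, q, r, s, k, hd, hk, rfl⟩ := h
  obtain ⟨p', q', r', s', k', hd', hk', rfl⟩ := h'
  refine ⟨p * p' + q * r', p * q' + q * s', r * p' + s * r', r * q' + s * s', k' * k, ?_,
    mul_ne_zero hk' hk, ?_⟩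
  rotate_left
  · rw [map_mul, subst_comp, algHom_C, algebraMap_eq, ← mul_assoc, ← C_mul]
  · have := mul_ne_zero hd hd'
    contrapose! this
    linear_combination this

theorem PE.symm {F G : P2} (h : PE F G) : PE G F := by
  obtain ⟨p, q, r, s, k, hd, hk, rfl⟩ := h
  refine ⟨s / (p * s - q * r), - q / (p * s - q * r), - r / (p * s - q * r), p / (p * s - q * r),
    k⁻¹, ?_, inv_ne_zero hk, ?_⟩
  · have : s / (p * s - q * r) * (p / (p * s - q * r))
        - - q / (p * s - q * r) * (- r / (p * s - q * r)) = (p * s - q * r)⁻¹ := by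
      rw [div_mul_div_comm, div_mul_div_comm, ← sub_div, eq_comm, inv_eq_one_div,
        div_eq_div_iff hd (mul_ne_zero hd hd)]
      ring
    rw [this]; exact inv_ne_zero hd
  · rw [map_mul, subst_comp, algHom_C, algebraMap_eq, ← mul_assoc, ← C_mul, inv_mul_cancel₀ hk]
    have e1 : p * (s / (p * s - q * r)) + q * (- r / (p * s - q * r)) = 1 := by
      rw [← mul_div_assoc, ← mul_div_assoc, ← add_div, div_eq_one_iff_eq hd]; ring
    have e2 : p * (- q / (p * s - q * r)) + q * (p / (p * s - q * r)) = 0 := by ring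
    have e3 : r * (s / (p * s - q * r)) + s * (- r / (p * s - q * r)) = 0 := by ring
    have e4 : r * (- q / (p * s - q * r)) + s * (p / (p * s - q * r)) = 1 := by
      rw [← mul_div_assoc, ← mul_div_assoc, ← add_div, div_eq_one_iff_eq hd]; ring
    rw [e1, e2, e3, e4, subst_one, C_1, one_mul]

theorem PE.exists_act {F G : P2} (h : PE F G) :
    ∃ (g : Matrix.GeneralLinearGroup (Fin 2) ℂ) (c : ℂ), c ≠ 0 ∧ G = C c * act g F := by
  obtain ⟨p, q, r, s, k, hd, hk, rfl⟩ := h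
  refine ⟨(Matrix.GeneralLinearGroup.mkOfDetNeZero !![p, q; r, s]
    (by rwa [Matrix.det_fin_two_of]))⁻¹, k, hk, ?_⟩
  congr 1
  rw [act, inv_inv, subst]
  congr 1
  refine MvPolynomial.algHom_ext (fun i => ?_)
  fin_cases i <;> simp [Matrix.GeneralLinearGroup.mkOfDetNeZero, Fin.sum_univ_two]

/-- A linear map matching one family of five points, permuted by `σ`, with another up to scalars
`c i` gives a projective equivalence of the associated quintics. The relation in `h0`, `h1` is the adjugate of
the matrix of the substitution. -/
theorem PE.of_points {l l' : Fin 5 → Fin 2 → ℂ} (σ : Equiv.Perm (Fin 5)) (p q r s : ℂ)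
    (c : Fin 5 → ℂ) (hd : p * s - q * r ≠ 0) (hc : ∀ i, c i ≠ 0)
    (h0 : ∀ i, l' i 0 = c i * (s * l (σ i) 0 - q * l (σ i) 1))
    (h1 : ∀ i, l' i 1 = c i * (p * l (σ i) 1 - r * l (σ i) 0)) :
    PE (quinticOf l) (quinticOf l') := by
  refine ⟨p, q, r, s, ∏ i, c i, hd, Finset.prod_ne_zero_iff.2 fun i _ => hc i, ?_⟩
  rw [quinticOf, quinticOf, map_prod, map_prod,
    ← Equiv.prod_comp σ (fun i => subst p q r s (lin (l i))), ← Finset.prod_mul_distrib]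
  refine Finset.prod_congr rfl fun i _ => ?_
  rw [subst_lin, lin, lin, h0, h1]
  simp only [C_mul, Matrix.cons_val_zero, Matrix.cons_val_one]
  ring

/-- Homogeneous coordinates of the configuration `∞, 0, 1, a, b`. -/
def std (a b : ℂ) : Fin 5 → Fin 2 → ℂ := ![![1, 0], ![0, 1], ![1, 1], ![a, 1], ![b, 1]]

/-- Projective equivalence of the unordered configurations `{∞, 0, 1, a, b}` for two
pairs of parameters. -/
def W (a b a' b' : ℂ) : Prop := PE (quinticOf (std a b)) (quinticOf (std a' b'))

theorem W_swap (a b : ℂ) : W a b b a := by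
  refine PE.of_points (Equiv.swap 3 4) 1 0 0 1 ![1, 1, 1, 1, 1] (by simp) ?_ ?_ ?_ <;>
  · intro i; fin_cases i <;> simp [std, Equiv.swap_apply_def]

theorem W_one_sub (a b : ℂ) : W a b (1 - a) (1 - b) := by
  refine PE.of_points (Equiv.swap 1 2) 1 (-1) 0 (-1) ![-1, 1, 1, 1, 1] (by simp) ?_ ?_ ?_ <;>
  · intro i; fin_cases i <;> simp [std, Equiv.swap_apply_def] <;> ring

theorem W_inv {a b : ℂ} (ha : a ≠ 0) (hb : b ≠ 0) : W a b (1 / a) (1 / b) := by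
  refine PE.of_points (Equiv.swap 0 1) 0 (-1) (-1) 0 ![1, 1, 1, 1 / a, 1 / b] (by simp) ?_ ?_ ?_ <;>
  · intro i; fin_cases i <;> simp [std, Equiv.swap_apply_def, ha, hb]

theorem W_scale {a : ℂ} (ha : a ≠ 0) (b : ℂ) : W a b (1 / a) (b / a) := by
  refine PE.of_points (Equiv.swap 2 3) a 0 0 1 ![1, 1 / a, 1 / a, 1 / a, 1 / a] (by simp [ha])
    ?_ ?_ ?_ <;>
  · intro i; fin_cases i <;> simp [std, Equiv.swap_apply_def, ha] <;> ring

/-! ### Configurations sharing the cross ratio `a` -/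

theorem W.trans {a b a' b' a'' b'' : ℂ} (h : W a b a' b') (h' : W a' b' a'' b'') :
    W a b a'' b'' := PE.trans h h'

theorem W.symm {a b a' b' : ℂ} (h : W a b a' b') : W a' b' a b := PE.symm h

theorem one_sub_ne {x : ℂ} (h : x - 1 ≠ 0) : 1 - x ≠ 0 := by
  rw [← neg_sub]; exact neg_ne_zero.2 h

theorem W_rho {a b : ℂ} (ha : a - 1 ≠ 0) (hb : b - 1 ≠ 0) :
    W a b (1 / (1 - a)) (1 / (1 - b)) :=
  (W_one_sub a b).trans (W_inv (one_sub_ne ha) (one_sub_ne hb))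

theorem W_V1 {a b : ℂ} (ha : a ≠ 0) (hb : b ≠ 0) : W a b a (a / b) := by
  have h := (W_inv ha hb).trans (W_scale (one_div_ne_zero ha) (1 / b))
  have e : 1 / b / (1 / a) = a / b := by field_simp
  rwa [one_div_one_div, e] at h

theorem W_V2 {a b : ℂ} (ha : a - 1 ≠ 0) (hb : b - 1 ≠ 0) : W a b a ((b - a) / (b - 1)) := by
  have h := ((W_one_sub a b).trans (W_V1 (one_sub_ne ha) (one_sub_ne hb))).trans (W_one_sub _ _)
  have hb' := one_sub_ne hb
  have e : 1 - (1 - a) / (1 - b) = (b - a) / (b - 1) := by field_simp; ring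
  rwa [sub_sub_cancel, e] at h

theorem W_of_tt {a b b' : ℂ} (h : Good a b) (h' : Good a b') (ht : tt a b = tt a b') :
    W a b a b' := by
  rcases tt_inj h h' ht with rfl | rfl | rfl | rfl
  · exact PE.refl _
  · exact W_V1 h.a0 h.b0
  · exact W_V2 h.a1 h.b1
  · have := (W_V2 h.a1 h.b1).trans (W_V1 h.a0 (div_ne_zero h.ba h.b1))
    rwa [div_div_eq_mul_div] at this

/-- If `a² - a + 1 = 0`, then `z ↦ 1/(1 - z)` fixes `a` and permutes `∞, 0, 1` cyclically; it acts
on `tt a` as multiplication by `-a` about the centre `4(1 + a)/3`. -/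
theorem good_rho_of_S {a b : ℂ} (h : Good a b) (hS : a ^ 2 - a + 1 = 0) :
    Good a (1 / (1 - b)) ∧
      3 * tt a (1 / (1 - b)) - 4 * (1 + a) = - a * (3 * tt a b - 4 * (1 + a)) := by
  have hb := one_sub_ne h.b1
  have hg : Good a (1 / (1 - b)) := by
    refine ⟨h.a0, h.a1, one_div_ne_zero hb, ?_, ?_⟩
    · have : 1 / (1 - b) - 1 = b / (1 - b) := by field_simp; ring
      rw [this]; exact div_ne_zero h.b0 hb
    · have : 1 / (1 - b) - a = a * (b - a) / (1 - b) := by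
        field_simp; linear_combination hS
      rw [this]; exact div_ne_zero (mul_ne_zero h.a0 h.ba) hb
  refine ⟨hg, ?_⟩
  have e1 : 1 / (1 - b) - 1 = b / (1 - b) := by field_simp; ring
  have e2 : 1 / (1 - b) - a = a * (b - a) / (1 - b) := by
    field_simp; linear_combination hS
  obtain ⟨h1, h2, h3, h4, h5⟩ := h
  have t1 : tt a (1 / (1 - b)) =
      1 / (1 - b) + a * (1 - b) + a * (b - a) / b + b / (b - a) := by
    rw [tt, e1, e2]; field_simp
  have hb' : 1 / (1 - b) = - (1 / (b - 1)) := by field_simp; ring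
  rw [t1, tt, hb']
  field_simp
  grind

theorem W_rho_of_S {a b : ℂ} (h : Good a b) (hS : a ^ 2 - a + 1 = 0) : W a b a (1 / (1 - b)) := by
  have := W_rho h.a1 h.b1
  have ha := one_sub_ne h.a1
  rwa [show 1 / (1 - a) = a by field_simp; linear_combination hS] at this

/-- With `a` fixed, `E1` and `E2` determine the configuration: every case of `E_cases` comes from a
Möbius equivalence. -/
theorem W_of_E {a b b' : ℂ} (h : Good a b) (h' : Good a b') (e1 : E1 a b = E1 a b')
    (e2 : E2 a b = E2 a b') : W a b a b' := by
  rcases E_cases h h' e1 e2 with ht | ⟨hS, ht⟩ | ⟨hS, hv, ht⟩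
  · exact W_of_tt h h' ht
  · obtain ⟨g1, f1⟩ := good_rho_of_S h' hS
    obtain ⟨g2, f2⟩ := good_rho_of_S g1 hS
    rcases ht with ht | ht
    · refine (W_of_tt h g1 ?_).trans (W_rho_of_S h' hS).symm
      linear_combination (1 / 3 : ℂ) * (ht - f1)
    · refine (W_of_tt h g2 ?_).trans ((W_rho_of_S h' hS).trans (W_rho_of_S g1 hS)).symm
      rw [f1] at f2
      linear_combination (1 / 3 : ℂ) * (ht - f2) - (1 / 3) * (3 * tt a b' - 4 * (1 + a)) * hS
  · have ha0 := h.a0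
    have ha1 := one_sub_ne h.a1
    have hb0 := h'.b0
    have hb1 := h'.b1
    have hba := h'.ba
    rcases ht with hT | ht
    · rcases mul_eq_zero.1 hT with hT | hT
      · rcases mul_eq_zero.1 hT with hT | hT
        -- the involution `z ↦ 1/z` fixes `-1` and acts on `tt` by `t ↦ -t`
        · obtain rfl : a = -1 := by linear_combination hT
          have hg : Good (-1) (1 / b') := by
            refine ⟨h.a0, h.a1, one_div_ne_zero hb0, ?_, ?_⟩
            · rw [show 1 / b' - 1 = - (b' - 1) / b' by field_simp; ring]
              exact div_ne_zero (neg_ne_zero.2 hb1) hb0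
            · rw [show 1 / b' - -1 = (b' - -1) / b' by field_simp; ring]
              exact div_ne_zero hba hb0
          have hW : W (-1) b' (-1) (1 / b') := by
            have := W_inv ha0 hb0
            rwa [show (1 : ℂ) / -1 = -1 by norm_num] at this
          refine (W_of_tt h hg ?_).trans hW.symm
          have : tt (-1) (1 / b') = - tt (-1) b' := by
            rw [tt, tt, show 1 / b' - 1 = - (b' - 1) / b' by field_simp; ring,
              show 1 / b' - -1 = (b' - -1) / b' by field_simp; ring]
            field_simp
            ring
          rw [this]; linear_combination (1 / 3 : ℂ) * hv
        -- the involution `z ↦ z/(z - 1)` fixes `2` and acts on `tt` by `t ↦ 8 - t`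
        · obtain rfl : a = 2 := by linear_combination hT
          have c1 : b' / (b' - 1) - 1 = 1 / (b' - 1) := by field_simp; ring
          have c2 : b' / (b' - 1) - 2 = - (b' - 2) / (b' - 1) := by field_simp; ring
          have hg : Good 2 (b' / (b' - 1)) := by
            refine ⟨h.a0, h.a1, div_ne_zero hb0 hb1, ?_, ?_⟩
            · rw [c1]; exact one_div_ne_zero hb1
            · rw [c2]; exact div_ne_zero (neg_ne_zero.2 hba) hb1
          have hW : W 2 b' 2 (b' / (b' - 1)) := by
            have c3 : 1 - 1 / b' = (b' - 1) / b' := by field_simp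
            have := ((W_inv ha0 hb0).trans (W_one_sub _ _)).trans
              (W_inv (by norm_num) (by rw [c3]; exact div_ne_zero hb1 hb0))
            rwa [show (1 : ℂ) / (1 - 1 / 2) = 2 by norm_num, c3, one_div_div] at this
          refine (W_of_tt h hg ?_).trans hW.symm
          have : tt 2 (b' / (b' - 1)) = 8 - tt 2 b' := by
            rw [tt, tt, c1, c2]
            field_simp
            ring
          rw [this]; linear_combination (1 / 3 : ℂ) * hv
      -- the involution `z ↦ 1 - z` fixes `1/2` and acts on `tt` by `t ↦ 4 - t`
      · obtain rfl : a = 1 / 2 := by linear_combination (1 / 2 : ℂ) * hT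
        have hg : Good (1 / 2) (1 - b') := by
          refine ⟨h.a0, h.a1, one_sub_ne hb1, ?_, ?_⟩
          · rw [show 1 - b' - 1 = - b' by ring]
            exact neg_ne_zero.2 hb0
          · rw [show 1 - b' - 1 / 2 = - (b' - 1 / 2) by ring]
            exact neg_ne_zero.2 hba
        have hW : W (1 / 2) b' (1 / 2) (1 - b') := by
          have := W_one_sub (1 / 2) b'
          rwa [show (1 : ℂ) - 1 / 2 = 1 / 2 by norm_num] at this
        refine (W_of_tt h hg ?_).trans hW.symm
        have : tt (1 / 2) (1 - b') = 4 - tt (1 / 2) b' := by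
          have hb1' := one_sub_ne hb1
          rw [tt, tt, show 1 - b' - 1 = - b' by ring,
            show 1 - b' - 1 / 2 = - (b' - 1 / 2) by ring,
            show (1 : ℂ) / 2 / (1 - b') = - (1 / 2 / (b' - 1)) by
              rw [← neg_sub b' 1, div_neg]]
          have hba' : b' * 2 - 1 ≠ 0 := by
            contrapose! hba; linear_combination (1 / 2 : ℂ) * hba
          rw [show b' - 1 / 2 = (b' * 2 - 1) / 2 by ring]
          field_simp
          ring
        rw [this]; linear_combination (4 / 3 : ℂ) * hv
    · have g1 : Good a (1 / (1 - a)) := by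
        refine ⟨h.a0, h.a1, one_div_ne_zero ha1, ?_, ?_⟩
        · rw [show 1 / (1 - a) - 1 = a / (1 - a) by field_simp; ring]
          exact div_ne_zero ha0 ha1
        · rw [show 1 / (1 - a) - a = (a ^ 2 - a + 1) / (1 - a) by field_simp; ring]
          exact div_ne_zero hS ha1
      have g2 : Good a (1 - 1 / a) := by
        refine ⟨h.a0, h.a1, ?_, ?_, ?_⟩
        · rw [show 1 - 1 / a = (a - 1) / a by field_simp]
          exact div_ne_zero h.a1 ha0
        · rw [show 1 - 1 / a - 1 = - (1 / a) by ring]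
          exact neg_ne_zero.2 (one_div_ne_zero ha0)
        · rw [show 1 - 1 / a - a = - (a ^ 2 - a + 1) / a by field_simp; ring]
          exact div_ne_zero (neg_ne_zero.2 hS) ha0
      -- exchange the fourth and fifth points, then apply `z ↦ 1/(1 - z)` twice
      have hW : W a (1 / (1 - a)) a (1 - 1 / a) := by
        have w1 := W_swap a (1 / (1 - a))
        have w2 := W_rho g1.b1 h.a1
        have e1 : 1 / (1 - 1 / (1 - a)) = 1 - 1 / a := by
          rw [show 1 - 1 / (1 - a) = - a / (1 - a) by field_simp; ring]; field_simp; ring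
        rw [e1] at w2
        have w3 := W_rho g2.b1 g1.b1
        rw [e1, show 1 / (1 - (1 - 1 / a)) = a by rw [sub_sub_cancel, one_div_one_div]] at w3
        exact (w1.trans w2).trans w3
      have hne : (a ^ 2 - a + 1) * (a * (1 - a)) ≠ 0 := mul_ne_zero hS (mul_ne_zero ha0 ha1)
      have p1 : (a ^ 2 - a + 1) * (a * (1 - a)) * tt a (1 / (1 - a)) =
          1 - 2 * a + 5 * a ^ 2 - 6 * a ^ 3 + 6 * a ^ 4 - 4 * a ^ 5 + a ^ 6 := by
        rw [tt, show 1 / (1 - a) - 1 = a / (1 - a) by field_simp; ring,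
          show 1 / (1 - a) - a = (a ^ 2 - a + 1) / (1 - a) by field_simp; ring]
        obtain ⟨S, hS'⟩ : ∃ S, S = a ^ 2 - a + 1 := ⟨_, rfl⟩
        rw [← hS'] at hS ⊢
        field_simp
        rw [hS']
        ring
      have p2 : (a ^ 2 - a + 1) * (a * (1 - a)) * tt a (1 - 1 / a) =
          - 1 + 4 * a - 6 * a ^ 2 + 6 * a ^ 3 - 5 * a ^ 4 + 2 * a ^ 5 - a ^ 6 := by
        rw [tt, show 1 - 1 / a - 1 = - (1 / a) by ring,
          show 1 - 1 / a - a = - (a ^ 2 - a + 1) / a by field_simp; ring,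
          show 1 - 1 / a = - (1 - a) / a by field_simp; ring]
        obtain ⟨S, hS'⟩ : ∃ S, S = a ^ 2 - a + 1 := ⟨_, rfl⟩
        rw [← hS'] at hS ⊢
        field_simp
        rw [hS']
        ring
      rcases ht with ht | ht
      · refine ((W_of_tt h g1 (mul_left_cancel₀ hne ?_)).trans hW).trans
          (W_of_tt g2 h' (mul_left_cancel₀ hne ?_))
        · rw [ht, p1]
        · rw [p2]; linear_combination ht - (a * (1 - a)) * hv
      · refine ((W_of_tt h g2 (mul_left_cancel₀ hne ?_)).trans hW.symm).trans
          (W_of_tt g1 h' (mul_left_cancel₀ hne ?_))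
        · rw [ht, p2]
        · rw [p1]; linear_combination ht - (a * (1 - a)) * hv

/-! ### Configurations with equal `j`-invariant of the first four points -/

theorem jn_inv {x : ℂ} (hx : x ≠ 0) : jn (1 / x) = jn x := by
  rw [jn, jn, show 1 - 1 / x = - (1 - x) / x by field_simp; ring,
    show (1 / x) ^ 2 - 1 / x + 1 = (x ^ 2 - x + 1) / x ^ 2 by field_simp; ring]
  field_simp

theorem jn_one_sub (x : ℂ) : jn (1 - x) = jn x := by
  rw [jn, jn, sub_sub_cancel]; congr 1 <;> ring

/-- The second configuration consists of distinct points, is projectively equivalent to the first,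
and has the same symmetric functions `E1` and `E2`. -/
structure Move (a b a' b' : ℂ) : Prop where
  good : Good a' b'
  w : W a b a' b'
  e1 : E1 a b = E1 a' b'
  e2 : E2 a b = E2 a' b'

theorem Move.trans {a b a' b' a'' b'' : ℂ} (h : Move a b a' b') (h' : Move a' b' a'' b'') :
    Move a b a'' b'' := ⟨h'.good, h.w.trans h'.w, h.e1.trans h'.e1, h.e2.trans h'.e2⟩

theorem Move.one_sub {a b : ℂ} (h : Good a b) : Move a b (1 - a) (1 - b) := by
  have ha := one_sub_ne h.a1
  have hb := one_sub_ne h.b1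
  obtain ⟨h1, h2, h3, h4, h5⟩ := h
  have eA : jA (1 - a) (1 - b) = jA a b := jn_one_sub b
  have eB : jB (1 - a) (1 - b) = jC a b := by
    rw [jB, jC, ← neg_sub b 1, ← neg_sub a 1, neg_div_neg_eq]
  have eC : jC (1 - a) (1 - b) = jB a b := by
    rw [jB, jC, show 1 - b - 1 = - b by ring, show 1 - a - 1 = - a by ring, neg_div_neg_eq]
  have eD : jD (1 - a) (1 - b) = jD a b := by
    rw [jD, jD, show (1 - b) * (1 - a - 1) / ((1 - a) * (1 - b - 1)) =
      1 / (b * (a - 1) / (a * (b - 1))) by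
        rw [show 1 - b - 1 = - b by ring, show 1 - a - 1 = - a by ring, ← neg_sub b 1,
          ← neg_sub a 1]
        field_simp, jn_inv]
    simp [*]
  refine ⟨⟨ha, ?_, hb, ?_, ?_⟩, W_one_sub a b, ?_, ?_⟩
  · simpa using h1
  · simpa using h3
  · rw [show 1 - b - (1 - a) = - (b - a) by ring]; exact neg_ne_zero.2 h5
  · rw [E1, E1, eA, eB, eC, eD]; ring
  · rw [E2, E2, eA, eB, eC, eD]; ring

theorem Move.inv {a b : ℂ} (h : Good a b) : Move a b (1 / a) (1 / b) := by
  obtain ⟨h1, h2, h3, h4, h5⟩ := h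
  have ha : 1 / a - 1 = - (a - 1) / a := by field_simp; ring
  have hb : 1 / b - 1 = - (b - 1) / b := by field_simp; ring
  have hab : 1 / b - 1 / a = - (b - a) / (a * b) := by field_simp; ring
  have eA : jA (1 / a) (1 / b) = jA a b := jn_inv h3
  have eB : jB (1 / a) (1 / b) = jB a b := by
    rw [jB, jB, show 1 / b / (1 / a) = 1 / (b / a) by field_simp, jn_inv (div_ne_zero h3 h1)]
  have eC : jC (1 / a) (1 / b) = jD a b := by
    rw [jC, jD, ha, hb, ← jn_inv (x := b * (a - 1) / (a * (b - 1))) (by simp [*])]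
    congr 1; field_simp
  have eD : jD (1 / a) (1 / b) = jC a b := by
    rw [jC, jD, ha, hb, ← jn_inv (x := (b - 1) / (a - 1)) (by simp [*])]
    congr 1; field_simp
  refine ⟨⟨one_div_ne_zero h1, ?_, one_div_ne_zero h3, ?_, ?_⟩, W_inv h1 h3, ?_, ?_⟩
  · rw [ha]; exact div_ne_zero (neg_ne_zero.2 h2) h1
  · rw [hb]; exact div_ne_zero (neg_ne_zero.2 h4) h3
  · rw [hab]; exact div_ne_zero (neg_ne_zero.2 h5) (mul_ne_zero h1 h3)
  · rw [E1, E1, eA, eB, eC, eD]; ring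
  · rw [E2, E2, eA, eB, eC, eD]; ring

/-- The reconstruction theorem in normalised coordinates: a permutation of `∞, 0, 1` reduces to
the case of equal fourth points. -/
theorem W_of_all {a b a' b' : ℂ} (h : Good a b) (h' : Good a' b') (e1 : E1 a b = E1 a' b')
    (e2 : E2 a b = E2 a' b') (ej : jn a = jn a') : W a b a' b' := by
  suffices H : ∃ b'', Move a' b' a b'' by
    obtain ⟨b'', r⟩ := H
    exact (W_of_E h r.good (e1.trans r.e1) (e2.trans r.e2)).trans r.w.symm
  rcases jn_inj h'.a0 h'.a1 h.a0 h.a1 ej.symm with rfl | rfl | rfl | rfl | rfl | rfl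
  · exact ⟨b', h', PE.refl _, rfl, rfl⟩
  · exact ⟨_, Move.one_sub h'⟩
  · exact ⟨_, Move.inv h'⟩
  · exact ⟨_, (Move.one_sub h').trans (Move.inv (Move.one_sub h').good)⟩
  · exact ⟨_, (Move.inv h').trans (Move.one_sub (Move.inv h').good)⟩
  · have r := (Move.one_sub h').trans (Move.inv (Move.one_sub h').good)
    exact ⟨_, r.trans (Move.one_sub r.good)⟩

/-! ### Reduction of quintics to the normal form -/

/-- The `j`-invariant of a binary quartic. -/
def jq (Q : P2) : ℂ := Sq Q ^ 3 / (Sq Q ^ 3 - 27 * Tq Q ^ 2)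

/-- Reading off the coefficients of an explicitly written quartic (without binomial factors). -/
theorem mcoeff_form (q0 q1 q2 q3 q4 : ℂ) (Q : P2)
    (hQ : Q = C q0 * X 0 ^ 4 + C q1 * X 0 ^ 3 * X 1 + C q2 * X 0 ^ 2 * X 1 ^ 2
      + C q3 * X 0 * X 1 ^ 3 + C q4 * X 1 ^ 4) :
    mcoeff 4 0 Q = q0 ∧ mcoeff 3 1 Q = q1 ∧ mcoeff 2 2 Q = q2 ∧ mcoeff 1 3 Q = q3 ∧
      mcoeff 0 4 Q = q4 := by
  have key : ∀ (c : ℂ) (m n i j : ℕ), mcoeff i j (C c * X 0 ^ m * X 1 ^ n) =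
      if m = i ∧ n = j then c else 0 := by
    intro c m n i j
    rw [mcoeff, mul_assoc, coeff_C_mul, X_pow_eq_monomial, X_pow_eq_monomial, monomial_mul,
      coeff_monomial]
    have : (Finsupp.single (0 : Fin 2) m + Finsupp.single 1 n
        = Finsupp.single 0 i + Finsupp.single 1 j) ↔ (m = i ∧ n = j) := by
      constructor
      · intro h
        have h0 := DFunLike.congr_fun h 0
        have h1 := DFunLike.congr_fun h 1
        simp at h0 h1
        exact ⟨h0, h1⟩
      · rintro ⟨rfl, rfl⟩; rfl
    simp only [this]
    split_ifs <;> simp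
  have e : Q = C q0 * X 0 ^ 4 * X 1 ^ 0 + C q1 * X 0 ^ 3 * X 1 ^ 1 + C q2 * X 0 ^ 2 * X 1 ^ 2
      + C q3 * X 0 ^ 1 * X 1 ^ 3 + C q4 * X 0 ^ 0 * X 1 ^ 4 := by rw [hQ]; ring
  have hadd : ∀ (i j : ℕ) (F G : P2), mcoeff i j (F + G) = mcoeff i j F + mcoeff i j G :=
    fun i j F G => coeff_add _ _ _
  rw [e]
  simp only [hadd, key]
  norm_num

theorem quartic_expand (p q r s : Fin 2 → ℂ) :
    lin p * lin q * lin r * lin s =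
      C (p 1 * q 1 * r 1 * s 1) * X 0 ^ 4
      + C (-(p 0 * q 1 * r 1 * s 1 + p 1 * q 0 * r 1 * s 1 + p 1 * q 1 * r 0 * s 1
        + p 1 * q 1 * r 1 * s 0)) * X 0 ^ 3 * X 1
      + C (p 0 * q 0 * r 1 * s 1 + p 0 * q 1 * r 0 * s 1 + p 0 * q 1 * r 1 * s 0
        + p 1 * q 0 * r 0 * s 1 + p 1 * q 0 * r 1 * s 0 + p 1 * q 1 * r 0 * s 0) * X 0 ^ 2 * X 1 ^ 2
      + C (-(p 1 * q 0 * r 0 * s 0 + p 0 * q 1 * r 0 * s 0 + p 0 * q 0 * r 1 * s 0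
        + p 0 * q 0 * r 0 * s 1)) * X 0 * X 1 ^ 3
      + C (p 0 * q 0 * r 0 * s 0) * X 1 ^ 4 := by
  simp only [lin, C_mul, C_add, C_neg]
  ring

theorem Sq_lin (p q r s : Fin 2 → ℂ) :
    Sq (lin p * lin q * lin r * lin s) =
      ((br p r * br q s) ^ 2 - (br p r * br q s) * (br p s * br q r) + (br p s * br q r) ^ 2)
        / 12 := by
  obtain ⟨m0, m1, m2, m3, m4⟩ := mcoeff_form _ _ _ _ _ _ (quartic_expand p q r s)
  rw [Sq, m0, m1, m2, m3, m4]
  simp only [br]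
  ring

theorem Tq_lin (p q r s : Fin 2 → ℂ) :
    Tq (lin p * lin q * lin r * lin s) =
      (br p r * br q s + br p s * br q r) * (2 * (br p r * br q s) - br p s * br q r) *
        (br p r * br q s - 2 * (br p s * br q r)) / 432 := by
  obtain ⟨m0, m1, m2, m3, m4⟩ := mcoeff_form _ _ _ _ _ _ (quartic_expand p q r s)
  rw [Tq, m0, m1, m2, m3, m4]
  simp only [br]
  ring

theorem br_plucker (p q r s : Fin 2 → ℂ) :
    br p s * br q r - br p r * br q s = - (br p q * br r s) := by
  simp only [br]; ring

/-- The `j`-invariant of a quartic with distinct roots in terms of their cross ratio. -/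
theorem jq_lin {p q r s : Fin 2 → ℂ} (hpq : br p q ≠ 0) (hpr : br p r ≠ 0) (hps : br p s ≠ 0)
    (hqr : br q r ≠ 0) (hqs : br q s ≠ 0) (hrs : br r s ≠ 0) :
    jq (lin p * lin q * lin r * lin s) =
      4 / 27 * jn (br p r * br q s / (br p s * br q r)) := by
  rw [jq, Sq_lin, Tq_lin]
  have hpl := br_plucker p q r s
  have hA : br p r * br q s ≠ 0 := mul_ne_zero hpr hqs
  have hB : br p s * br q r ≠ 0 := mul_ne_zero hps hqr
  have hC : br p s * br q r - br p r * br q s ≠ 0 := by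
    rw [hpl]; exact neg_ne_zero.2 (mul_ne_zero hpq hrs)
  generalize br p r * br q s = A at *
  generalize br p s * br q r = B at *
  have e : ((A ^ 2 - A * B + B ^ 2) / 12) ^ 3
      - 27 * ((A + B) * (2 * A - B) * (A - 2 * B) / 432) ^ 2
      = A ^ 2 * B ^ 2 * (B - A) ^ 2 / 256 := by ring
  rw [e, jn, show 1 - A / B = (B - A) / B by field_simp,
    show (A / B) ^ 2 - A / B + 1 = (A ^ 2 - A * B + B ^ 2) / B ^ 2 by field_simp]
  field_simp
  ring

/-- Every five distinct points can be moved to `∞, 0, 1, a, b`, where `a` and `b` are cross ratios,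
and the five `j`-invariants are then those of the normal form. -/
theorem exists_std (l : Fin 5 → Fin 2 → ℂ) (h : ∀ i j, i ≠ j → br (l i) (l j) ≠ 0) :
    ∃ a b, Good a b ∧ PE (quinticOf (std a b)) (quinticOf l) ∧
      jq (quarticOmit l 0) = 4 / 27 * jD a b ∧ jq (quarticOmit l 1) = 4 / 27 * jC a b ∧
      jq (quarticOmit l 2) = 4 / 27 * jB a b ∧ jq (quarticOmit l 3) = 4 / 27 * jA a b ∧
      jq (quarticOmit l 4) = 4 / 27 * jn a := by
  have h01 := h 0 1 (by decide)
  have h02 := h 0 2 (by decide)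
  have h03 := h 0 3 (by decide)
  have h04 := h 0 4 (by decide)
  have h12 := h 1 2 (by decide)
  have h13 := h 1 3 (by decide)
  have h14 := h 1 4 (by decide)
  have h23 := h 2 3 (by decide)
  have h24 := h 2 4 (by decide)
  have h34 := h 3 4 (by decide)
  obtain ⟨a, ha⟩ : ∃ a, a = br (l 0) (l 2) * br (l 1) (l 3) / (br (l 0) (l 3) * br (l 1) (l 2)) :=
    ⟨_, rfl⟩
  obtain ⟨b, hb⟩ : ∃ b, b = br (l 0) (l 2) * br (l 1) (l 4) / (br (l 0) (l 4) * br (l 1) (l 2)) :=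
    ⟨_, rfl⟩
  have ha1 : a - 1 = br (l 0) (l 1) * br (l 2) (l 3) / (br (l 0) (l 3) * br (l 1) (l 2)) := by
    rw [ha, div_sub_one (mul_ne_zero h03 h12)]
    congr 1; linear_combination - br_plucker (l 0) (l 1) (l 2) (l 3)
  have hb1 : b - 1 = br (l 0) (l 1) * br (l 2) (l 4) / (br (l 0) (l 4) * br (l 1) (l 2)) := by
    rw [hb, div_sub_one (mul_ne_zero h04 h12)]
    congr 1; linear_combination - br_plucker (l 0) (l 1) (l 2) (l 4)
  have hba : b - a = br (l 0) (l 1) * br (l 0) (l 2) * br (l 3) (l 4)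
      / (br (l 0) (l 4) * br (l 0) (l 3) * br (l 1) (l 2)) := by
    have := br_plucker (l 0) (l 1) (l 3) (l 4)
    rw [hb, ha]
    field_simp
    linear_combination - this
  refine ⟨a, b, ⟨?_, ?_, ?_, ?_, ?_⟩, ?_, ?_, ?_, ?_, ?_, ?_⟩
  · rw [ha]; simp [*]
  · rw [ha1]; simp [*]
  · rw [hb]; simp [*]
  · rw [hb1]; simp [*]
  · rw [hba]; simp [*]
  -- the adjugate of this matrix sends `∞, 0, 1` to `l 0, l 1, l 2`
  · refine PE.of_points (Equiv.refl _) (br (l 0) (l 2) * l 1 1) (- (br (l 0) (l 2) * l 1 0))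
      (br (l 1) (l 2) * l 0 1) (- (br (l 1) (l 2) * l 0 0))
      ![- (1 / br (l 1) (l 2)), 1 / br (l 0) (l 2), 1 / br (l 0) (l 1),
        br (l 0) (l 3) / (br (l 0) (l 2) * br (l 0) (l 1)),
        br (l 0) (l 4) / (br (l 0) (l 2) * br (l 0) (l 1))] ?_ ?_ ?_ ?_
    · rw [show br (l 0) (l 2) * l 1 1 * -(br (l 1) (l 2) * l 0 0) -
        -(br (l 0) (l 2) * l 1 0) * (br (l 1) (l 2) * l 0 1) =
        - (br (l 0) (l 1) * br (l 0) (l 2) * br (l 1) (l 2)) by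
          rw [show br (l 0) (l 1) = l 0 0 * l 1 1 - l 0 1 * l 1 0 from rfl]; ring]
      simp [*]
    · intro i; fin_cases i <;> simp [*]
    · intro i; fin_cases i <;> simp [std, ha, hb] <;> field_simp <;> simp only [br] <;> ring
    · intro i; fin_cases i <;> simp [std, ha, hb] <;> field_simp <;> simp only [br] <;> ring
  · have : quarticOmit l 0 = lin (l 1) * lin (l 2) * lin (l 4) * lin (l 3) := by
      rw [quarticOmit, show (Finset.univ.erase (0 : Fin 5)) = {1, 2, 4, 3} by decide]
      simp [mul_assoc]
    rw [this, jq_lin h12 h14 h13 h24 h23 (h 4 3 (by decide)), jD, ha1, hb1]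
    congr 2
    rw [ha, hb]; field_simp
  · have : quarticOmit l 1 = lin (l 0) * lin (l 2) * lin (l 3) * lin (l 4) := by
      rw [quarticOmit, show (Finset.univ.erase (1 : Fin 5)) = {0, 2, 3, 4} by decide]
      simp [mul_assoc]
    rw [this, jq_lin h02 h03 h04 h23 h24 h34, jC, ha1, hb1]
    congr 2
    field_simp
  · have : quarticOmit l 2 = lin (l 0) * lin (l 1) * lin (l 3) * lin (l 4) := by
      rw [quarticOmit, show (Finset.univ.erase (2 : Fin 5)) = {0, 1, 3, 4} by decide]
      simp [mul_assoc]
    rw [this, jq_lin h01 h03 h04 h13 h14 h34, jB]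
    congr 2
    rw [ha, hb]; field_simp
  · have : quarticOmit l 3 = lin (l 0) * lin (l 1) * lin (l 2) * lin (l 4) := by
      rw [quarticOmit, show (Finset.univ.erase (3 : Fin 5)) = {0, 1, 2, 4} by decide]
      simp [mul_assoc]
    rw [this, jq_lin h01 h02 h04 h12 h14 h24, jA, hb]
  · have : quarticOmit l 4 = lin (l 0) * lin (l 1) * lin (l 2) * lin (l 3) := by
      rw [quarticOmit, show (Finset.univ.erase (4 : Fin 5)) = {0, 1, 2, 3} by decide]
      simp [mul_assoc]
    rw [this, jq_lin h01 h02 h03 h12 h13 h23, ha]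

theorem quarticOmit_perm (l : Fin 5 → Fin 2 → ℂ) (σ : Equiv.Perm (Fin 5)) (i : Fin 5) :
    quarticOmit (l ∘ σ) i = quarticOmit l (σ i) := by
  rw [quarticOmit, quarticOmit]
  refine Finset.prod_equiv σ ?_ (fun _ _ => rfl)
  intro j; simp

/-- Two finite families with the same multiset of values agree up to a permutation of the indices:
the fibres over each value are equinumerous. -/
theorem exists_perm_of_map_eq {f g : Fin 5 → ℂ}
    (h : Multiset.map f Finset.univ.val = Multiset.map g Finset.univ.val) :
    ∃ σ : Equiv.Perm (Fin 5), ∀ i, f i = g (σ i) := by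
  classical
  have key : ∀ c, Nonempty ({i // f i = c} ≃ {i // g i = c}) := by
    intro c
    refine Fintype.card_eq.mp ?_
    have := congrArg (Multiset.count c) h
    rw [Multiset.count_map, Multiset.count_map] at this
    rw [Fintype.card_subtype, Fintype.card_subtype, Finset.card_def, Finset.card_def,
      Finset.filter_val, Finset.filter_val]
    simpa only [eq_comm] using this
  exact ⟨Equiv.ofFiberEquiv fun c => (key c).some, fun i =>
    (Equiv.ofFiberEquiv_map (fun c => (key c).some) i).symm⟩

/-- Reconstruction: a binary quintic with five pairwise non-proportional roots is
determined up to projective equivalence by the unordered multiset of the five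
`j`-invariants of its four-point subconfigurations. -/
theorem quintic_reconstruction (l₁ l₂ : Fin 5 → Fin 2 → ℂ)
    (h₁ : ∀ i j, i ≠ j → br (l₁ i) (l₁ j) ≠ 0)
    (h₂ : ∀ i j, i ≠ j → br (l₂ i) (l₂ j) ≠ 0)
    (hj : Multiset.map
        (fun i => Sq (quarticOmit l₁ i) ^ 3
          / (Sq (quarticOmit l₁ i) ^ 3 - 27 * Tq (quarticOmit l₁ i) ^ 2))
        Finset.univ.val
      = Multiset.map
        (fun i => Sq (quarticOmit l₂ i) ^ 3
          / (Sq (quarticOmit l₂ i) ^ 3 - 27 * Tq (quarticOmit l₂ i) ^ 2))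
        Finset.univ.val) :
    ∃ (g : Matrix.GeneralLinearGroup (Fin 2) ℂ) (c : ℂ), c ≠ 0 ∧
      quinticOf l₂ = C c * act g (quinticOf l₁) := by
  obtain ⟨σ, hσ⟩ : ∃ σ : Equiv.Perm (Fin 5),
      ∀ i, jq (quarticOmit l₁ i) = jq (quarticOmit l₂ (σ i)) := exists_perm_of_map_eq hj
  -- relabelling the roots of the second quintic by `σ` does not change the quintic
  obtain ⟨a, b, hg, hp, q0, q1, q2, q3, q4⟩ := exists_std l₁ h₁
  obtain ⟨a', b', hg', hp', q0', q1', q2', q3', q4'⟩ := exists_std (l₂ ∘ σ)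
    (fun i j hij => h₂ _ _ (σ.injective.ne hij))
  have hs : ∀ i, jq (quarticOmit l₁ i) = jq (quarticOmit (l₂ ∘ σ) i) := fun i => by
    rw [quarticOmit_perm]; exact hσ i
  have h427 : (4 / 27 : ℂ) ≠ 0 := by norm_num
  have eD : jD a b = jD a' b' := mul_left_cancel₀ h427 (by rw [← q0, ← q0', hs])
  have eC : jC a b = jC a' b' := mul_left_cancel₀ h427 (by rw [← q1, ← q1', hs])
  have eB : jB a b = jB a' b' := mul_left_cancel₀ h427 (by rw [← q2, ← q2', hs])
  have eA : jA a b = jA a' b' := mul_left_cancel₀ h427 (by rw [← q3, ← q3', hs])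
  have ej : jn a = jn a' := mul_left_cancel₀ h427 (by rw [← q4, ← q4', hs])
  have hW : W a b a' b' := W_of_all hg hg' (by rw [E1, E1, eA, eB, eC, eD])
    (by rw [E2, E2, eA, eB, eC, eD]) ej
  have hq : quinticOf (l₂ ∘ σ) = quinticOf l₂ := Equiv.prod_comp σ (fun i => lin (l₂ i))
  rw [hq] at hp'
  exact ((hp.symm.trans hW).trans hp').exists_act

end
end
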